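/- arXiv:2205.04938 — 2 statements merged into one kernel-verified Lean document; each statement's English description precedes it below -/
import Mathlib

section
/- Let (x₁,y₁,z₁) and (x₂,y₂,z₂) = (a+1−x₁, b+1−y₁, ℓ+1−z₁) be antipodal elements of [a] × [b] × [ℓ], and let f be a P-strict labeling in L_{([a]×[b])×[ℓ]}(R^{a+b}). Then the multiset Dist(f,(x₂,y₂,z₂)) = {Pro^i(f)(x₂,y₂,z₂) : 0 ≤ i ≤ a+b−1} equals {a+b+1−m : m ∈ Dist(f,(x₁,y₁,z₁))}. -/
open scoped Classical

/-- `f ∈ L_{P×[ℓ]}(R^q)`: a `P`-strict labeling of `P × [ℓ]` with labels globally bounded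
between `1` and `q`: strictly increasing on each layer (copy of `P`), weakly increasing
along each fiber (copy of `[ℓ]`), with labels in `{1,…,q}`. -/
def IsPStrict (P : Type*) [PartialOrder P] (ℓ q : ℕ) (f : P × Fin ℓ → ℤ) : Prop :=
  (∀ (p p' : P) (i : Fin ℓ), p < p' → f (p, i) < f (p', i)) ∧
  (∀ (p : P) (i i' : Fin ℓ), i ≤ i' → f (p, i) ≤ f (p, i')) ∧
  (∀ p i, 1 ≤ f (p, i) ∧ f (p, i) ≤ (q : ℤ))

/-- A label `f(p,i)` is raisable if some `g ∈ L_{P×[ℓ]}(R^q)` has `g(p,i) > f(p,i)` and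
agrees with `f` off the fiber of `p`. -/
def Raisable (P : Type*) [PartialOrder P] (ℓ q : ℕ) (f : P × Fin ℓ → ℤ)
    (p : P) (i : Fin ℓ) : Prop :=
  ∃ g, IsPStrict P ℓ q g ∧ f (p, i) < g (p, i) ∧
    ∀ (p' : P) (i' : Fin ℓ), p' ≠ p → g (p', i') = f (p', i')

/-- A label `f(p,i)` is lowerable if some `g ∈ L_{P×[ℓ]}(R^q)` has `g(p,i) < f(p,i)` and
agrees with `f` off the fiber of `p`. -/
def Lowerable (P : Type*) [PartialOrder P] (ℓ q : ℕ) (f : P × Fin ℓ → ℤ)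
    (p : P) (i : Fin ℓ) : Prop :=
  ∃ g, IsPStrict P ℓ q g ∧ g (p, i) < f (p, i) ∧
    ∀ (p' : P) (i' : Fin ℓ), p' ≠ p → g (p', i') = f (p', i')

/-- The `k`-th Bender–Knuth involution `ρ_k` on `P`-strict labelings with the global
restriction function `R^q` (for which the next allowed label above `k` is `k+1`): in
each fiber, the free labels (`a` raisable `k`'s followed by `b` lowerable `(k+1)`'s)
are replaced by `b` `k`'s followed by `a` `(k+1)`'s: a free position gets the label `k`
precisely when its rank among the free positions of its fiber is at most the number of
free `(k+1)`'s. -/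
noncomputable def bkP (P : Type*) [PartialOrder P] (ℓ q : ℕ) (k : ℤ)
    (f : P × Fin ℓ → ℤ) : P × Fin ℓ → ℤ :=
  fun pi =>
    let p := pi.1
    let freeK : Fin ℓ → Prop := fun z => f (p, z) = k ∧ Raisable P ℓ q f p z
    let freeK1 : Fin ℓ → Prop := fun z => f (p, z) = k + 1 ∧ Lowerable P ℓ q f p z
    if freeK pi.2 ∨ freeK1 pi.2 then
      if (Finset.univ.filter (fun z : Fin ℓ => (freeK z ∨ freeK1 z) ∧ z ≤ pi.2)).card ≤
          (Finset.univ.filter (fun z : Fin ℓ => freeK1 z)).card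
      then k else k + 1
    else f pi

/-- `P`-strict promotion `Pro = ρ_{q−1} ∘ ⋯ ∘ ρ_2 ∘ ρ_1` (so `ρ_1` is applied first). -/
noncomputable def proP (P : Type*) [PartialOrder P] (ℓ q : ℕ)
    (f : P × Fin ℓ → ℤ) : P × Fin ℓ → ℤ :=
  (List.range (q - 1)).foldl (fun g i => bkP P ℓ q ((i : ℤ) + 1) g) f

/-- `Dist(f,p) = {Pro^i(f)(p) : 0 ≤ i ≤ a+b−1}` for a `P`-strict labeling `f` of
`([a]×[b])×[ℓ]` with restriction `R^{a+b}` and `p ∈ [a]×[b]×[ℓ]`. -/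
noncomputable def DistP (a b ℓ : ℕ) (f : (Fin a × Fin b) × Fin ℓ → ℤ)
    (p : (Fin a × Fin b) × Fin ℓ) : Multiset ℤ :=
  (Multiset.range (a + b)).map (fun i => (proP (Fin a × Fin b) ℓ (a + b))^[i] f p)


namespace PS

/-- path sums from `(i,j)` down to `(m,n)`. -/
noncomputable def K (W : ℕ → ℕ → ℝ) (m n : ℕ) : ℕ → ℕ → ℝ
  | 0, _ => 0
  | _ + 1, 0 => 0
  | i + 1, j + 1 => W (i+1) (j+1) * ((if i + 1 = m ∧ j + 1 = n then 1 else 0)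
      + K W m n i (j+1) + K W m n (i+1) j)
termination_by i j => i + j

lemma K_zero_left (W : ℕ → ℕ → ℝ) (m n j : ℕ) : K W m n 0 j = 0 := by rw [K]
lemma K_zero_right (W : ℕ → ℕ → ℝ) (m n i : ℕ) : K W m n i 0 = 0 := by
  cases i <;> rw [K]
lemma K_succ (W : ℕ → ℕ → ℝ) (m n i j : ℕ) : K W m n (i+1) (j+1) =
    W (i+1) (j+1) * ((if i + 1 = m ∧ j + 1 = n then 1 else 0)
      + K W m n i (j+1) + K W m n (i+1) j) := by rw [K]

lemma K_bot (W : ℕ → ℕ → ℝ) : ∀ (N i j : ℕ), i + j = N → ∀ m n : ℕ, 1 ≤ m → 1 ≤ n →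
    K W m n i j = W m n * ((if i = m ∧ j = n then 1 else 0) + K W (m+1) n i j
      + K W m (n+1) i j) := by
  intro N
  induction N using Nat.strong_induction_on with
  | _ N ih =>
  intro i j hN m n hm hn
  rcases i with _ | i
  · have : ¬ (0 = m ∧ j = n) := by omega
    simp [K_zero_left, this]
  rcases j with _ | j
  · have : ¬ (i + 1 = m ∧ 0 = n) := by omega
    simp [K_zero_right, this]
  have h1 := ih (i + (j+1)) (by omega) i (j+1) rfl m n hm hn
  have h2 := ih (i + 1 + j) (by omega) (i+1) j rfl m n hm hn
  rw [K_succ W m n, K_succ W (m+1) n, K_succ W m (n+1), h1, h2]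
  have e1 : (i + 1 = m + 1 ∧ j + 1 = n) ↔ (i = m ∧ j + 1 = n) := by omega
  have e2 : (i + 1 = m ∧ j + 1 = n + 1) ↔ (i + 1 = m ∧ j = n) := by omega
  simp only [e1, e2]
  by_cases h : i + 1 = m ∧ j + 1 = n
  · have n1 : ¬ (i = m ∧ j + 1 = n) := by omega
    have n2 : ¬ (i + 1 = m ∧ j = n) := by omega
    rw [if_pos h, if_neg n1, if_neg n2]
    obtain ⟨rfl, rfl⟩ := h
    ring
  · simp only [h, if_false]
    ring

lemma K_bot' (W : ℕ → ℕ → ℝ) (i j m n : ℕ) (hm : 1 ≤ m) (hn : 1 ≤ n) :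
    K W m n i j = W m n * ((if i = m ∧ j = n then 1 else 0) + K W (m+1) n i j
      + K W m (n+1) i j) := K_bot W _ i j rfl m n hm hn

/-- sum over lower covers -/
noncomputable def D (x : ℕ → ℕ → ℝ) (i j : ℕ) : ℝ :=
  (if i = 1 ∧ j = 1 then 1 else 0) + x (i-1) j + x i (j-1)

/-- sum over upper covers of inverses -/
noncomputable def U (a b : ℕ) (B : ℝ) (x : ℕ → ℕ → ℝ) (i j : ℕ) : ℝ :=
  (if a = i ∧ b = j then B⁻¹ else 0) + (x (i+1) j)⁻¹ + (x i (j+1))⁻¹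

def In (a b i j : ℕ) : Prop := (1 ≤ i ∧ i ≤ a) ∧ (1 ≤ j ∧ j ≤ b)

structure Lab (a b : ℕ) (x : ℕ → ℕ → ℝ) : Prop where
  pos : ∀ i j, In a b i j → 0 < x i j
  zero : ∀ i j, ¬ In a b i j → x i j = 0

lemma Lab.nonneg {a b : ℕ} {x : ℕ → ℕ → ℝ} (h : Lab a b x) (i j : ℕ) : 0 ≤ x i j := by
  by_cases hh : In a b i j
  · exact (h.pos i j hh).le
  · exact (h.zero i j hh).ge

lemma Lab.D_pos {a b : ℕ} {x : ℕ → ℕ → ℝ} (h : Lab a b x) {i j : ℕ} (hh : In a b i j) :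
    0 < D x i j := by
  unfold D
  have h1 := h.nonneg (i-1) j
  have h2 := h.nonneg i (j-1)
  obtain ⟨⟨hi, hi'⟩, hj, hj'⟩ := hh
  by_cases e : i = 1 ∧ j = 1
  · simp only [e, and_self, if_true] at *; linarith
  · simp only [e, if_false]
    by_cases e1 : i = 1
    · have := h.pos i (j-1) ⟨by omega, by omega⟩; linarith
    · have := h.pos (i-1) j ⟨by omega, by omega⟩; linarith

lemma Lab.U_pos {a b : ℕ} {B : ℝ} (hB : 0 < B) {x : ℕ → ℕ → ℝ} (h : Lab a b x) {i j : ℕ}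
    (hh : In a b i j) : 0 < U a b B x i j := by
  unfold U
  have h1 := inv_nonneg.2 (h.nonneg (i+1) j)
  have h2 := inv_nonneg.2 (h.nonneg i (j+1))
  obtain ⟨⟨hi, hi'⟩, hj, hj'⟩ := hh
  by_cases e : a = i ∧ b = j
  · have := inv_pos.2 hB
    simp only [e, and_self, if_true] at *; linarith
  · simp only [e, if_false]
    by_cases e1 : a = i
    · have := inv_pos.2 (h.pos i (j+1) ⟨by omega, by omega⟩); linarith
    · have := inv_pos.2 (h.pos (i+1) j ⟨by omega, by omega⟩); linarith

/-- `x = K` -/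
lemma lab_eq_K {a b : ℕ} {x : ℕ → ℕ → ℝ} (h : Lab a b x) : ∀ N i j, i + j = N →
    x i j = K (fun i j => x i j / D x i j) 1 1 i j := by
  intro N
  induction N using Nat.strong_induction_on with
  | _ N ih =>
  intro i j hN
  by_cases hh : In a b i j
  · obtain ⟨⟨hi, hi'⟩, hj, hj'⟩ := id hh
    obtain ⟨i, rfl⟩ := Nat.exists_eq_add_of_le' hi
    obtain ⟨j, rfl⟩ := Nat.exists_eq_add_of_le' hj
    rw [K_succ, ← ih (i + (j+1)) (by omega) i (j+1) rfl, ← ih (i + 1 + j) (by omega) (i+1) j rfl]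
    have := h.D_pos hh
    have e : (if i + 1 = 1 ∧ j + 1 = 1 then (1:ℝ) else 0) + x i (j+1) + x (i+1) j
      = D x (i+1) (j+1) := by simp [D]
    rw [e]; field_simp
  · rw [h.zero i j hh]
    rcases i with _ | i
    · rw [K_zero_left]
    rcases j with _ | j
    · rw [K_zero_right]
    rw [K_succ, h.zero _ _ hh]; simp

/-- `W_t` computed from the next labeling -/
lemma inv_eq_K {a b : ℕ} {B : ℝ} (hB : 0 < B) {x W : ℕ → ℕ → ℝ} (h : Lab a b x)
    (hW : ∀ i j, In a b i j → W i j * (x i j * U a b B x i j) = 1)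
    (hW0 : ∀ i j, ¬ In a b i j → W i j = 0) : ∀ N i j, 1 ≤ i → 1 ≤ j → a + b + 2 ≤ N + i + j →
    (x i j)⁻¹ = B⁻¹ * K W i j a b := by
  intro N
  induction N with
  | zero =>
    intro i j hi hj hN
    have hh : ¬ In a b i j := by unfold In; omega
    rw [h.zero _ _ hh, K_bot' _ _ _ _ _ hi hj, hW0 _ _ hh]; simp
  | succ N ih =>
    intro i j hi hj hN
    by_cases hh : In a b i j
    · rw [K_bot' _ _ _ _ _ hi hj]
      have h1 := ih (i+1) j (by omega) hj (by omega)
      have h2 := ih i (j+1) hi (by omega) (by omega)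
      have h3 := hW i j hh
      have h4 := h.pos i j hh
      have e : B⁻¹ * (W i j * ((if a = i ∧ b = j then 1 else 0) + K W (i+1) j a b
        + K W i (j+1) a b)) = W i j * U a b B x i j := by
        unfold U
        rw [h1, h2]
        split_ifs <;> ring
      rw [e]
      field_simp
      linarith
    · rw [h.zero _ _ hh, K_bot' _ _ _ _ _ hi hj, hW0 _ _ hh]; simp

lemma K_W_out {a b : ℕ} {W : ℕ → ℕ → ℝ} (hW0 : ∀ i j, ¬ In a b i j → W i j = 0)
    (i j m n : ℕ) (hm : 1 ≤ m) (hn : 1 ≤ n) (h : ¬ In a b m n) : K W m n i j = 0 := by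
  rw [K_bot' _ _ _ _ _ hm hn, hW0 _ _ h]; simp

lemma conversion {A b : ℕ} {B : ℝ} {x W : ℕ → ℕ → ℝ} (h : Lab (A+1) b x) (hb : 1 ≤ b)
    (hW : ∀ i j, In (A+1) b i j → W i j * (x i j * U (A+1) b B x i j) = 1)
    (hW0 : ∀ i j, ¬ In (A+1) b i j → W i j = 0) (m k : ℕ) (hm : 1 ≤ m) (hm' : m ≤ A)
    (hk : 1 ≤ k) (hk' : k ≤ A) :
    K (fun i j => x i j / D x i j) (m+1) 1 (k+1) b = K W m 1 k b := by
  set W' : ℕ → ℕ → ℝ := fun i j => x i j / D x i j with hW'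
  have hin : ∀ i j, 1 ≤ i → i ≤ A+1 → 1 ≤ j → j ≤ b → 0 < x i j := fun i j h1 h2 h3 h4 =>
    h.pos i j ⟨⟨h1, h2⟩, h3, h4⟩
  obtain ⟨hf, hhf⟩ : ∃ hf : ℕ → ℕ → ℝ, ∀ i j, hf i j = K W' (m+1) 1 i j / x i j := ⟨_, fun _ _ => rfl⟩
  obtain ⟨g, hg⟩ : ∃ g : ℕ → ℕ → ℝ, ∀ i j, g i j = x i j * K W i j k b := ⟨_, fun _ _ => rfl⟩
  have hD : ∀ i j, 1 ≤ i → 1 ≤ j → D x (i+1) (j+1) = x i (j+1) + x (i+1) j := by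
    intro i j h1 h2
    have : ¬ (i + 1 = 1 ∧ j + 1 = 1) := by omega
    simp [D]; omega
  have hint : ∀ i j, 1 ≤ i → i ≤ A → 1 ≤ j → j + 1 ≤ b →
      hf (i+1) (j+1) * (x i (j+1) + x (i+1) j) = x i (j+1) * hf i (j+1) + x (i+1) j * hf (i+1) j := by
    intro i j h1 h2 h3 h4
    have p1 := hin (i+1) (j+1) (by omega) (by omega) (by omega) (by omega)
    have p2 := hin i (j+1) (by omega) (by omega) (by omega) (by omega)
    have p3 := hin (i+1) j (by omega) (by omega) (by omega) (by omega)
    rw [hhf, hhf, hhf, K_succ, hW']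
    simp only [hD i j h1 h3]
    have : ¬ (i + 1 = m + 1 ∧ j + 1 = 1) := by omega
    simp only [this, if_false]
    field_simp
    ring
  have gint : ∀ i j, 1 ≤ i → i ≤ A → 1 ≤ j → j + 1 ≤ b →
      g i j * (x i (j+1) + x (i+1) j) = x (i+1) j * g i (j+1) + x i (j+1) * g (i+1) j := by
    intro i j h1 h2 h3 h4
    have p1 := hin i j (by omega) (by omega) (by omega) (by omega)
    have p2 := hin i (j+1) (by omega) (by omega) (by omega) (by omega)
    have p3 := hin (i+1) j (by omega) (by omega) (by omega) (by omega)
    rw [hg, hg, hg, K_bot' _ _ _ _ _ h1 h3]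
    have h5 := hW i j ⟨by omega, by omega⟩
    unfold U at h5
    have e1 : ¬ (A + 1 = i ∧ b = j) := by omega
    have : ¬ (k = i ∧ b = j) := by omega
    simp only [this, e1, if_false, zero_add] at h5 ⊢
    have h6 : W i j * x i j * (x i (j+1) + x (i+1) j) = x i (j+1) * x (i+1) j := by
      field_simp at h5
      linarith
    linear_combination (K W (i+1) j k b + K W i (j+1) k b) * h6
  have hleft : ∀ j, K W' (m+1) 1 1 j = 0 := by
    intro j
    induction j with
    | zero => rw [K_zero_right]
    | succ j ih =>
      rw [K_succ, ih, K_zero_left]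
      have : ¬ (0 + 1 = m + 1 ∧ j + 1 = 1) := by omega
      rw [if_neg this]; simp
  have hleft' : ∀ j, hf 1 j = 0 := by intro j; rw [hhf, hleft]; simp
  have gright : ∀ j, 1 ≤ j → j + 1 ≤ b → g (A+1) j = g (A+1) (j+1) := by
    intro j h3 h4
    have p1 := hin (A+1) j (by omega) (by omega) (by omega) (by omega)
    have p2 := hin (A+1) (j+1) (by omega) (by omega) (by omega) (by omega)
    rw [hg, hg, K_bot' _ _ _ _ _ (by omega) h3]
    have h5 := hW (A+1) j ⟨by omega, by omega⟩
    unfold U at h5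
    have e1 : ¬ (A + 1 = A + 1 ∧ b = j) := by omega
    have : ¬ (k = A + 1 ∧ b = j) := by omega
    rw [h.zero (A+1+1) j (by unfold In; omega)] at h5
    rw [K_W_out hW0 _ _ (A+1+1) j (by omega) (by omega) (by unfold In; omega)]
    rw [if_neg e1] at h5
    rw [if_neg this]
    simp only [zero_add, inv_zero] at h5 ⊢
    field_simp at h5
    rw [← h5]
    ring
  have hbot : ∀ i, 1 ≤ i → i ≤ A + 1 → hf i 1 = if m + 1 ≤ i then (x m 1)⁻¹ else 0 := by
    intro i hi
    induction i, hi using Nat.le_induction with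
    | base => intro _; rw [hleft', if_neg (by omega)]
    | succ i hi ih =>
      intro hi'
      have p1 := hin (i+1) 1 (by omega) (by omega) (by omega) (by omega)
      have p2 := hin i 1 (by omega) (by omega) (by omega) (by omega)
      have ih' := ih (by omega)
      rw [hhf] at ih' ⊢
      rw [K_succ, K_zero_right]
      have hd : D x (i+1) (0+1) = x i 1 := by
        have : ¬ (i + 1 = 1) := by omega
        simp [D, h.zero (i+1) 0 (by unfold In; omega)]; omega
      simp only [hW', hd]
      rw [div_eq_iff p2.ne'] at ih'
      rw [← hW']
      simp only [zero_add] at ih' ⊢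
      rw [ih']
      by_cases e : i = m
      · subst e; simp; field_simp
      · have e1 : ¬ (i + 1 = m + 1 ∧ True) := by omega
        have e2 : (m + 1 ≤ i + 1) ↔ (m + 1 ≤ i) := by omega
        rw [if_neg e1]
        simp only [e2]
        field_simp
        simp
  have gtop : ∀ n, ∀ i, 1 ≤ i → i ≤ A + 1 → A + 1 ≤ n + i → g i b = if i ≤ k then x (k+1) b else 0 := by
    intro n
    induction n with
    | zero =>
      intro i h1 h2 h3
      obtain rfl : i = A + 1 := by omega
      rw [hg, K_bot' _ _ _ _ _ h1 hb, K_W_out hW0 _ _ (A+1+1) b (by omega) (by omega) (by unfold In; omega),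
        K_W_out hW0 _ _ (A+1) (b+1) (by omega) (by omega) (by unfold In; omega), if_neg (by omega), if_neg (by omega)]
      simp
    | succ n ih =>
      intro i h1 h2 h3
      by_cases hi : A + 1 ≤ n + i
      · exact ih i h1 h2 hi
      have hi' : i ≤ A := by omega
      have p1 := hin (i+1) b (by omega) (by omega) (by omega) (by omega)
      have p2 := hin i b (by omega) (by omega) (by omega) (by omega)
      have ih' := ih (i+1) (by omega) (by omega) (by omega)
      have h5 := hW i b ⟨by omega, by omega⟩
      unfold U at h5
      rw [h.zero i (b+1) (by unfold In; omega)] at h5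
      have e1 : ¬ (A + 1 = i ∧ b = b) := by omega
      rw [if_neg e1] at h5
      simp only [zero_add, inv_zero, add_zero] at h5
      rw [hg] at ih' ⊢
      rw [K_bot' _ _ _ _ _ h1 hb, K_W_out hW0 _ _ i (b+1) (by omega) (by omega) (by unfold In; omega)]
      have h6 : W i b * x i b = x (i+1) b := by
        field_simp at h5; linarith
      have e : x i b * (W i b * ((if k = i ∧ b = b then 1 else 0) + K W (i+1) b k b + 0))
         = (if k = i ∧ b = b then x (i+1) b else 0) + x (i+1) b * K W (i+1) b k b := by
        rw [← h6]; split_ifs <;> ring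
      rw [e, ih']
      by_cases e : i = k
      · subst e; simp
      · have e1 : ¬ (k = i ∧ b = b) := by omega
        have e2 : (i + 1 ≤ k) ↔ (i ≤ k) := by omega
        rw [if_neg e1]
        simp only [e2, zero_add]
  let S : ℕ → ℝ := fun j => ∑ i ∈ Finset.range A, hf (i+2) j * (g (i+2) j - g (i+1) j)
  have hS : ∀ j, 1 ≤ j → j + 1 ≤ b → S j = S (j+1) := by
    intro j hj hj'
    obtain ⟨E, hE⟩ : ∃ E : ℕ → ℝ, ∀ i, E i = hf (i+1) (j+1) * (g (i+1) j - g (i+1) (j+1)) :=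
      ⟨_, fun _ => rfl⟩
    have : S j - S (j+1) = ∑ i ∈ Finset.range A, (E (i+1) - E i) := by
      simp only [S]
      rw [← Finset.sum_sub_distrib]
      refine Finset.sum_congr rfl ?_
      intro i hi
      rw [Finset.mem_range] at hi
      have q1 := hint (i+1) j (by omega) (by omega) hj hj'
      have q2 := gint (i+1) j (by omega) (by omega) hj hj'
      have p2 := hin (i+1) (j+1) (by omega) (by omega) (by omega) (by omega)
      have p3 := hin (i+1+1) j (by omega) (by omega) (by omega) (by omega)
      rw [hE, hE]
      show hf (i+1+1) j * (g (i+1+1) j - g (i+1) j) - hf (i+1+1) (j+1) * (g (i+1+1) (j+1) - g (i+1) (j+1)) =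
        hf (i+1+1) (j+1) * (g (i+1+1) j - g (i+1+1) (j+1)) - hf (i+1) (j+1) * (g (i+1) j - g (i+1) (j+1))
      generalize x (i+1) (j+1) = X at *
      generalize x (i+1+1) j = Y at *
      generalize hf (i+1+1) (j+1) = h11 at *
      generalize hf (i+1+1) j = h10 at *
      generalize hf (i+1) (j+1) = h01 at *
      generalize g (i+1+1) (j+1) = g11 at *
      generalize g (i+1+1) j = g10 at *
      generalize g (i+1) (j+1) = g01 at *
      generalize g (i+1) j = g00 at *
      have q3 : (X + Y) * ((h11 - h10) * (g10 - g01) - (g00 - g01) * (h01 - h10)) = 0 := by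
        linear_combination (g10 - g01) * q1 - (h01 - h10) * q2
      rcases mul_eq_zero.1 q3 with q4 | q4
      · linarith
      · linarith
    rw [Finset.sum_range_sub, hE, hE] at this
    rw [gright j hj hj'] at this
    simp only [zero_add, hleft'] at this
    linarith
  have hS' : ∀ j, 1 ≤ j → j ≤ b → S 1 = S j := by
    intro j hj
    induction j, hj using Nat.le_induction with
    | base => intro _; rfl
    | succ j hj ih => intro hj'; rw [ih (by omega), hS j hj hj']
  have pm := hin m 1 (by omega) (by omega) (by omega) (by omega)
  have pk := hin (k+1) b (by omega) (by omega) (by omega) (by omega)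
  have S1 : S 1 = (x m 1)⁻¹ * (g (A+1) 1 - g m 1) := by
    obtain ⟨E, hE⟩ : ∃ E : ℕ → ℝ, ∀ i, E i = (x m 1)⁻¹ * g (max (i+1) m) 1 :=
      ⟨_, fun _ => rfl⟩
    have : S 1 = ∑ i ∈ Finset.range A, (E (i+1) - E i) := by
      refine Finset.sum_congr rfl ?_
      intro i hi
      rw [Finset.mem_range] at hi
      rw [hbot (i+2) (by omega) (by omega), hE, hE]
      by_cases e : m + 1 ≤ i + 2
      · rw [if_pos e, max_eq_left (by omega), max_eq_left (by omega)]; ring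
      · rw [if_neg e, max_eq_right (by omega), max_eq_right (by omega)]; ring
    rw [this, Finset.sum_range_sub, hE, hE, max_eq_left (by omega), max_eq_right (by omega)]; ring
  have Sb : S b = - (hf (k+1) b * x (k+1) b) := by
    have : S b = ∑ i ∈ Finset.range A, if i = k - 1 then - (hf (k+1) b * x (k+1) b) else 0 := by
      refine Finset.sum_congr rfl ?_
      intro i hi
      rw [Finset.mem_range] at hi
      rw [gtop A (i+2) (by omega) (by omega) (by omega), gtop A (i+1) (by omega) (by omega) (by omega)]
      by_cases e : i = k - 1
      · subst e
        rw [if_pos rfl, if_neg (by omega), if_pos (by omega), show k - 1 + 2 = k + 1 by omega]; ring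
      · rw [if_neg e]
        by_cases e2 : i + 1 ≤ k
        · rw [if_pos e2, if_pos (by omega)]; ring
        · rw [if_neg e2, if_neg (by omega)]; ring
    rw [this, Finset.sum_ite_eq', if_pos (by rw [Finset.mem_range]; omega)]
  have gA : g (A+1) 1 = 0 := by
    have : ∀ j, 1 ≤ j → j ≤ b → g (A+1) 1 = g (A+1) j := by
      intro j hj
      induction j, hj using Nat.le_induction with
      | base => intro _; rfl
      | succ j hj ih => intro hj'; rw [ih (by omega), gright j hj hj']
    rw [this b hb le_rfl, gtop A (A+1) (by omega) (by omega) (by omega), if_neg (by omega)]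
  have fin := hS' b hb le_rfl
  rw [S1, Sb, gA, hg, hhf] at fin
  field_simp at fin
  have fin2 : x m 1 * (K W' (m + 1) 1 (k + 1) b - K W m 1 k b) = 0 := by linarith
  rcases mul_eq_zero.1 fin2 with q | q <;> linarith

theorem recip {a b : ℕ} {B : ℝ} (hB : 0 < B) (G : ℕ → ℕ → ℕ → ℝ) (h : ∀ t, Lab a b (G t))
    (hrec : ∀ t i j, In a b i j → G (t+1) i j * G t i j * U a b B (G (t+1)) i j = D (G t) i j) :
    ∀ j i, In a b i j → ∀ t, G (t+i+j-1) i j * G t (a+1-i) (b+1-j) = B := by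
  have hW : ∀ t i j, In a b i j → (G t i j / D (G t) i j) *
      (G (t+1) i j * U a b B (G (t+1)) i j) = 1 := by
    intro t i j hh
    have h1 := (h t).D_pos hh
    rw [← hrec t i j hh] at h1 ⊢
    have h2 := (h t).pos i j hh
    have h3 := (h (t+1)).pos i j hh
    have h4 := (h (t+1)).U_pos hB hh
    field_simp
  have hW0 : ∀ t i j, ¬ In a b i j → G t i j / D (G t) i j = 0 := by
    intro t i j hh
    rw [(h t).zero i j hh]; simp
  -- the edge
  have edge : ∀ i, 1 ≤ i → i ≤ a → 1 ≤ b → ∀ t, G (t+i) i 1 * G t (a+1-i) b = B := by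
    intro i hi hia hb t
    obtain ⟨A, rfl⟩ : ∃ A, a = A + 1 := ⟨a - 1, by omega⟩
    obtain ⟨W, hWd⟩ : ∃ W : ℕ → ℕ → ℕ → ℝ, ∀ t, W t = fun i j => G t i j / D (G t) i j :=
      ⟨_, fun _ => rfl⟩
    have c : ∀ s, s + 1 ≤ i → K (W (t+i-1)) i 1 (A+1) b = K (W (t+i-1-s)) (i-s) 1 (A+1-s) b := by
      intro s
      induction s with
      | zero => intro _; rfl
      | succ s ih =>
        intro hs
        rw [ih (by omega)]
        obtain ⟨τ, hτ⟩ : ∃ τ, t + i - 1 - s = τ + 1 := ⟨t + i - 1 - s - 1, by omega⟩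
        have e1 : t + i - 1 - (s+1) = τ := by omega
        obtain ⟨m, hm⟩ : ∃ m, i - s = m + 1 := ⟨i - s - 1, by omega⟩
        obtain ⟨k, hk⟩ : ∃ k, A + 1 - s = k + 1 := ⟨A - s, by omega⟩
        have e2 : i - (s+1) = m := by omega
        have e3 : A + 1 - (s+1) = k := by omega
        rw [hτ, e1, hm, hk, e2, e3]
        have := conversion (W := W τ) (B := B) (h (τ+1)) hb (by rw [hWd]; exact hW τ)
          (by rw [hWd]; exact hW0 τ) m k (by omega) (by omega) (by omega) (by omega)
        rw [← this, hWd]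
    have c1 := c (i-1) (by omega)
    rw [show t + i - 1 - (i-1) = t by omega, show i - (i-1) = 1 by omega,
      show A + 1 - (i-1) = A + 1 + 1 - i by omega] at c1
    have c2 := lab_eq_K (h t) _ (A+1+1-i) b rfl
    rw [← hWd, ← c1] at c2
    obtain ⟨τ, hτ⟩ : ∃ τ, t + i = τ + 1 := ⟨t + i - 1, by omega⟩
    have c3 := inv_eq_K (W := W τ) hB (h (τ+1)) (by rw [hWd]; exact hW τ)
          (by rw [hWd]; exact hW0 τ) (A+1+b+2) i 1 hi le_rfl (by omega)
    rw [show t + i - 1 = τ by omega] at c2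
    rw [← c2, ← hτ] at c3
    have p := (h (t+i)).pos i 1 ⟨by omega, by omega⟩
    field_simp at c3
    linarith
  intro j
  induction j using Nat.strong_induction_on with
  | _ j ih =>
  intro i hij t
  obtain ⟨⟨hi, hia⟩, hj, hjb⟩ := id hij
  by_cases hj1 : j = 1
  · subst hj1
    have := edge i hi hia hjb t
    simpa using this
  obtain ⟨j, rfl⟩ : ∃ j', j = j' + 1 := ⟨j - 1, by omega⟩
  have R1 : ∀ i' j', j' ≤ j → ∀ t τ, τ + 1 = t + i' + j' →
      (G τ i' j')⁻¹ = G t (a+1-i') (b+1-j') * B⁻¹ := by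
    intro i' j' hj' t τ ht
    by_cases hh : In a b i' j'
    · have := ih j' (by omega) i' hh t
      rw [← ht, Nat.add_sub_cancel] at this
      have p := (h τ).pos i' j' hh
      field_simp
      linarith
    · rw [(h τ).zero _ _ hh, (h t).zero _ _ (by unfold In at *; omega)]; simp
  have R2 : ∀ i' j', j' ≤ j → ∀ t τ, τ + 1 = t + i' + j' →
      G τ i' j' = B * (G t (a+1-i') (b+1-j'))⁻¹ := by
    intro i' j' hj' t τ ht
    have := congrArg (·⁻¹) (R1 i' j' hj' t τ ht)
    simp only [inv_inv, mul_inv] at this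
    rw [this]; ring
  have hv : In a b i j := ⟨by omega, by omega⟩
  have hv' : In a b (a+1-i) (b+1-j) := ⟨by omega, by omega⟩
  obtain ⟨s, hs⟩ : ∃ s, s + 1 = t + i + j := ⟨t + i + j - 1, by omega⟩
  have r1 := hrec s i j hv
  have r2 := hrec t (a+1-i) (b+1-j) hv'
  have eD : D (G s) i j = B * U a b B (G (t+1)) (a+1-i) (b+1-j) := by
    unfold D U
    rw [R2 (i-1) j (by omega) (t+1) s (by omega), R2 i (j-1) (by omega) (t+1) s (by omega)]
    rw [show a + 1 - (i-1) = a + 1 - i + 1 by omega, show b + 1 - (j-1) = b + 1 - j + 1 by omega]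
    have : (a = a + 1 - i ∧ b = b + 1 - j) ↔ (i = 1 ∧ j = 1) := by omega
    simp only [this]
    split_ifs
    · field_simp
    · ring
  rw [eD, R2 i j le_rfl t s (by omega), R2 i j le_rfl (t+1) (s+1) (by omega)] at r1
  have p1 := (h t).pos _ _ hv'
  have p2 := (h (t+1)).pos _ _ hv'
  have p3 := (h (t+1)).U_pos hB hv'
  have eU : U a b B (G (s+1)) i j = D (G t) (a+1-i) (b+1-j) * B⁻¹ := by
    rw [← r2]
    field_simp at r1 ⊢
    linarith
  unfold U D at eU
  rw [R1 (i+1) j le_rfl t (s+1) (by omega)] at eU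
  rw [show a + 1 - (i+1) = a + 1 - i - 1 by omega] at eU
  have : (a + 1 - i = 1 ∧ b + 1 - j = 1) ↔ (a = i ∧ b = j) := by omega
  simp only [this] at eU
  have fin : (G (s+1) i (j+1))⁻¹ = G t (a+1-i) (b+1-j-1) * B⁻¹ := by
    split_ifs at eU <;> linarith
  rw [show t + i + (j+1) - 1 = s + 1 by omega, show b + 1 - (j+1) = b + 1 - j - 1 by omega]
  have p := (h (s+1)).pos _ _ hij
  field_simp at fin
  linarith


/-- `g T` is of exact order `T ^ c` for `T ≥ 1`. -/
def Asy (g : ℝ → ℝ) (c : ℤ) : Prop :=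
  ∃ C : ℝ, 0 < C ∧ ∀ T : ℝ, 1 ≤ T → g T ≤ C * T ^ c ∧ T ^ c ≤ C * g T

lemma Asy.congr {g h : ℝ → ℝ} {c d : ℤ} (hg : Asy g c) (e : ∀ T, 1 ≤ T → h T = g T) (ed : d = c) :
    Asy h d := by
  obtain ⟨C, hC, H⟩ := hg
  subst ed
  exact ⟨C, hC, fun T hT => by rw [e T hT]; exact H T hT⟩

lemma asy_pow (c : ℤ) : Asy (fun T => T ^ c) c := ⟨1, one_pos, fun T _ => by simp⟩

lemma Asy.pos {g : ℝ → ℝ} {c : ℤ} (hg : Asy g c) {T : ℝ} (hT : 1 ≤ T) : 0 < g T := by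
  obtain ⟨C, hC, H⟩ := hg
  have h1 := (H T hT).2
  have : 0 < T ^ c := zpow_pos (by linarith) c
  by_contra h2
  push Not at h2
  nlinarith

lemma Asy.mul {g h : ℝ → ℝ} {c d : ℤ} (hg : Asy g c) (hh : Asy h d) :
    Asy (fun T => g T * h T) (c + d) := by
  have pg := fun T (hT : 1 ≤ T) => hg.pos hT
  have ph := fun T (hT : 1 ≤ T) => hh.pos hT
  obtain ⟨C, hC, H⟩ := hg
  obtain ⟨C', hC', H'⟩ := hh
  refine ⟨C * C', mul_pos hC hC', fun T hT => ?_⟩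
  have h0 : (0:ℝ) < T := by linarith
  have h1 : 0 < T ^ c := zpow_pos h0 c
  have h2 : 0 < T ^ d := zpow_pos h0 d
  have := pg T hT
  have := ph T hT
  rw [zpow_add₀ h0.ne']
  constructor
  · calc g T * h T ≤ (C * T ^ c) * (C' * T ^ d) :=
        mul_le_mul (H T hT).1 (H' T hT).1 (by positivity) (by positivity)
      _ = _ := by ring
  · calc T ^ c * T ^ d ≤ (C * g T) * (C' * h T) :=
        mul_le_mul (H T hT).2 (H' T hT).2 (by positivity) (by positivity)
      _ = _ := by ring

lemma Asy.inv {g : ℝ → ℝ} {c : ℤ} (hg : Asy g c) : Asy (fun T => (g T)⁻¹) (-c) := by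
  have pg := fun T (hT : 1 ≤ T) => hg.pos hT
  obtain ⟨C, hC, H⟩ := hg
  refine ⟨C, hC, fun T hT => ?_⟩
  have h0 : (0:ℝ) < T := by linarith
  have h1 : 0 < T ^ c := zpow_pos h0 c
  have := pg T hT
  obtain ⟨ha, hb⟩ := H T hT
  rw [zpow_neg]
  constructor
  · field_simp; linarith
  · field_simp; linarith

lemma Asy.add {g h : ℝ → ℝ} {c d : ℤ} (hg : Asy g c) (hh : Asy h d) :
    Asy (fun T => g T + h T) (max c d) := by
  have pg := fun T (hT : 1 ≤ T) => hg.pos hT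
  have ph := fun T (hT : 1 ≤ T) => hh.pos hT
  obtain ⟨C, hC, H⟩ := hg
  obtain ⟨C', hC', H'⟩ := hh
  refine ⟨C + C', by positivity, fun T hT => ?_⟩
  have h0 : (0:ℝ) < T := by linarith
  have h1 : T ^ c ≤ T ^ max c d := zpow_le_zpow_right₀ hT (le_max_left _ _)
  have h2 : T ^ d ≤ T ^ max c d := zpow_le_zpow_right₀ hT (le_max_right _ _)
  have p1 := pg T hT
  have p2 := ph T hT
  obtain ⟨ha, hb⟩ := H T hT
  obtain ⟨ha', hb'⟩ := H' T hT
  constructor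
  · nlinarith
  · rcases max_choice c d with e | e <;> rw [e]
    · nlinarith [mul_pos hC p2, mul_pos hC' p2, mul_pos hC' p1]
    · nlinarith [mul_pos hC p2, mul_pos hC p1, mul_pos hC' p1]

lemma Asy.le {g : ℝ → ℝ} {c d : ℤ} (hg : Asy g c) (hh : Asy g d) : c ≤ d := by
  obtain ⟨C, hC, H⟩ := hg
  obtain ⟨C', hC', H'⟩ := hh
  by_contra hcd
  push Not at hcd
  obtain ⟨T, hTd⟩ : ∃ T, T = C * C' + 1 := ⟨_, rfl⟩
  have hT : 1 ≤ T := by nlinarith [mul_pos hC hC']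
  have h0 : (0:ℝ) < T := by linarith
  have h2 : 0 < T ^ d := zpow_pos h0 d
  have h3 : T ^ d * T ≤ T ^ c := by
    rw [← zpow_add_one₀ h0.ne']
    exact zpow_le_zpow_right₀ hT (by omega)
  have h4 : T ^ c ≤ C * (C' * T ^ d) :=
    (H T hT).2.trans (mul_le_mul_of_nonneg_left (H' T hT).1 hC.le)
  have : T ^ d * (T - C * C') ≤ 0 := by nlinarith
  rw [hTd] at this h2
  nlinarith

lemma Asy.uniq {g : ℝ → ℝ} {c d : ℤ} (hg : Asy g c) (hh : Asy g d) : c = d :=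
  le_antisymm (hg.le hh) (hh.le hg)

/-- birational rowmotion -/
noncomputable def stepG (a b : ℕ) (B : ℝ) (g : ℕ → ℕ → ℝ) (i j : ℕ) : ℝ :=
  if _h : (1 ≤ i ∧ i ≤ a) ∧ (1 ≤ j ∧ j ≤ b) then
    D g i j / (g i j * ((if a = i ∧ b = j then B⁻¹ else 0) + (stepG a b B g (i+1) j)⁻¹
      + (stepG a b B g i (j+1))⁻¹))
  else 0
termination_by (a + 1 - i) + (b + 1 - j)

lemma stepG_in {a b : ℕ} {B : ℝ} {g : ℕ → ℕ → ℝ} {i j : ℕ} (h : In a b i j) :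
    stepG a b B g i j = D g i j / (g i j * U a b B (stepG a b B g) i j) := by
  unfold In at h; rw [stepG, dif_pos h]; rfl

lemma stepG_out {a b : ℕ} {B : ℝ} {g : ℕ → ℕ → ℝ} {i j : ℕ} (h : ¬ In a b i j) :
    stepG a b B g i j = 0 := by
  unfold In at h; rw [stepG, dif_neg h]

/-- the labelings -/
noncomputable def GT (a b ℓ : ℕ) (c : ℕ → ℕ → ℤ) (T : ℝ) : ℕ → ℕ → ℕ → ℝ
  | 0 => fun i j => if (1 ≤ i ∧ i ≤ a) ∧ (1 ≤ j ∧ j ≤ b) then T ^ (c i j) else 0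
  | t + 1 => stepG a b (T ^ (ℓ : ℤ)) (GT a b ℓ c T t)

lemma GT_out {a b ℓ : ℕ} {c : ℕ → ℕ → ℤ} {T : ℝ} {t i j : ℕ} (h : ¬ In a b i j) :
    GT a b ℓ c T t i j = 0 := by
  cases t with
  | zero => exact if_neg h
  | succ t => exact stepG_out h

structure Pad (a b ℓ : ℕ) (c : ℕ → ℕ → ℤ) : Prop where
  nn : ∀ i j, 0 ≤ c i j
  le : ∀ i j, c i j ≤ ℓ
  l0 : ∀ j, 1 ≤ j → j ≤ b → c 0 j = 0
  b0 : ∀ i, 1 ≤ i → i ≤ a → c i 0 = 0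
  r1 : ∀ j, 1 ≤ j → j ≤ b → c (a+1) j = ℓ
  t1 : ∀ i, 1 ≤ i → i ≤ a → c i (b+1) = ℓ

lemma asy_D {a b ℓ : ℕ} {c : ℕ → ℕ → ℤ} (hc : Pad a b ℓ c) (g : ℝ → ℕ → ℕ → ℝ)
    (hg : ∀ i j, In a b i j → Asy (fun T => g T i j) (c i j))
    (hg0 : ∀ T i j, ¬ In a b i j → g T i j = 0) (i j : ℕ) (h : In a b i j) :
    Asy (fun T => D (g T) i j) (max (c (i-1) j) (c i (j-1))) := by
  obtain ⟨⟨hi, hia⟩, hj, hjb⟩ := id h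
  by_cases e1 : i = 1 <;> by_cases e2 : j = 1
  · refine (asy_pow 0).congr (fun T _ => ?_) ?_
    · rw [D, hg0 T (i-1) j (by unfold In; omega), hg0 T i (j-1) (by unfold In; omega),
        if_pos ⟨e1, e2⟩]; simp
    · subst e1 e2
      simp [hc.l0 1 le_rfl hjb, hc.b0 1 le_rfl hia]
  · refine (hg i (j-1) ⟨by omega, by omega⟩).congr (fun T _ => ?_) ?_
    · rw [D, hg0 T (i-1) j (by unfold In; omega), if_neg (by omega)]; simp
    · subst e1
      simp [hc.l0 j hj hjb, hc.nn]
  · refine (hg (i-1) j ⟨by omega, by omega⟩).congr (fun T _ => ?_) ?_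
    · rw [D, hg0 T i (j-1) (by unfold In; omega), if_neg (by omega)]; simp
    · subst e2
      simp [hc.b0 i hi hia, hc.nn]
  · refine ((hg (i-1) j ⟨by omega, by omega⟩).add (hg i (j-1) ⟨by omega, by omega⟩)).congr
      (fun T _ => ?_) rfl
    rw [D, if_neg (by omega)]; simp

lemma asy_U {a b ℓ : ℕ} {c : ℕ → ℕ → ℤ} (hc : Pad a b ℓ c) (g : ℝ → ℕ → ℕ → ℝ) (i j : ℕ)
    (hg1 : In a b (i+1) j → Asy (fun T => g T (i+1) j) (c (i+1) j))
    (hg2 : In a b i (j+1) → Asy (fun T => g T i (j+1)) (c i (j+1)))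
    (hg0 : ∀ T i j, ¬ In a b i j → g T i j = 0) (h : In a b i j) :
    Asy (fun T => U a b (T ^ (ℓ:ℤ)) (g T) i j) (- min (c (i+1) j) (c i (j+1))) := by
  obtain ⟨⟨hi, hia⟩, hj, hjb⟩ := id h
  by_cases e1 : a = i <;> by_cases e2 : b = j
  · refine (asy_pow ℓ).inv.congr (fun T _ => ?_) ?_
    · rw [U, hg0 T (i+1) j (by unfold In; omega), hg0 T i (j+1) (by unfold In; omega),
        if_pos ⟨e1, e2⟩]; simp
    · subst e1 e2
      simp [hc.r1 b hj le_rfl, hc.t1 a hi le_rfl]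
  · refine (hg2 ⟨by omega, by omega⟩).inv.congr (fun T _ => ?_) ?_
    · rw [U, hg0 T (i+1) j (by unfold In; omega), if_neg (by omega)]; simp
    · subst e1
      simp [hc.r1 j hj hjb, hc.le]
  · refine (hg1 ⟨by omega, by omega⟩).inv.congr (fun T _ => ?_) ?_
    · rw [U, hg0 T i (j+1) (by unfold In; omega), if_neg (by omega)]; simp
    · subst e2
      simp [hc.t1 i hi hia, hc.le]
  · refine ((hg1 ⟨by omega, by omega⟩).inv.add (hg2 ⟨by omega, by omega⟩).inv).congr
      (fun T _ => ?_) (by omega)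
    rw [U, if_neg (by omega)]; simp

theorem trop_recip {a b ℓ : ℕ} (c : ℕ → ℕ → ℕ → ℤ) (hc : ∀ t, Pad a b ℓ (c t))
    (hrec : ∀ t i j, In a b i j → c (t+1) i j + c t i j =
      min (c (t+1) (i+1) j) (c (t+1) i (j+1)) + max (c t (i-1) j) (c t i (j-1)))
    (t i j : ℕ) (h : In a b i j) : c (t+i+j-1) i j + c t (a+1-i) (b+1-j) = ℓ := by
  have key : ∀ t i j, In a b i j → Asy (fun T => GT a b ℓ (c 0) T t i j) (c t i j) := by
    intro t
    induction t with
    | zero =>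
      intro i j h
      exact (asy_pow _).congr (fun T _ => if_pos h) rfl
    | succ t ih =>
      have : ∀ N i j, a + b + 2 ≤ N + i + j → In a b i j →
          Asy (fun T => GT a b ℓ (c 0) T (t+1) i j) (c (t+1) i j) := by
        intro N
        induction N with
        | zero => intro i j hN h; unfold In at h; omega
        | succ N ihN =>
          intro i j hN h
          have d := asy_D (hc t) (fun T => GT a b ℓ (c 0) T t) ih (fun T i j h => GT_out h) i j h
          have u := asy_U (hc (t+1)) (fun T => GT a b ℓ (c 0) T (t+1)) i j
            (ihN _ _ (by omega)) (ihN _ _ (by omega)) (fun T i j h => GT_out h) h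
          refine (d.mul ((ih i j h).mul u).inv).congr (fun T _ => ?_) ?_
          · exact stepG_in h
          · have := hrec t i j h
            omega
      intro i j h
      exact this (a+b+2) i j (by omega) h
  have lab : ∀ T, 1 ≤ T → ∀ t, Lab a b (GT a b ℓ (c 0) T t) := fun T hT t =>
    ⟨fun i j h => (key t i j h).pos hT, fun i j h => GT_out h⟩
  have h' : In a b (a+1-i) (b+1-j) := by unfold In at *; omega
  have A1 := (key (t+i+j-1) i j h).mul (key t (a+1-i) (b+1-j) h')
  refine A1.uniq ((asy_pow ℓ).congr (fun T hT => ?_) rfl)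
  have hB : (0:ℝ) < T ^ (ℓ:ℤ) := zpow_pos (by linarith) _
  refine recip hB (GT a b ℓ (c 0) T) (lab T hT) ?_ j i h t
  intro t i j h
  have p1 := (lab T hT t).pos i j h
  have p2 := (lab T hT (t+1)).U_pos hB h
  have : GT a b ℓ (c 0) T (t+1) i j = D (GT a b ℓ (c 0) T t) i j / (GT a b ℓ (c 0) T t i j *
    U a b (T ^ (ℓ : ℤ)) (GT a b ℓ (c 0) T (t+1)) i j) := stepG_in h
  rw [this]
  field_simp


structure Valid (a b ℓ : ℕ) (C : ℕ → ℕ → ℕ) : Prop where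
  z1 : ∀ j, C 0 j = ℓ
  z2 : ∀ i, C i 0 = ℓ
  out : ∀ i j, 1 ≤ i → 1 ≤ j → (a < i ∨ b < j) → C i j = 0
  m1 : ∀ i j, C (i+1) j ≤ C i j
  m2 : ∀ i j, C i (j+1) ≤ C i j

lemma Valid.anti {a b ℓ : ℕ} {C : ℕ → ℕ → ℕ} (h : Valid a b ℓ C) {i i' j j' : ℕ} (hi : i ≤ i')
    (hj : j ≤ j') : C i' j' ≤ C i j := by
  have e1 : C i' j' ≤ C i j' := by
    have : Antitone (fun n => C n j') := antitone_nat_of_succ_le (fun n => h.m1 n j')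
    exact this hi
  have e2 : C i j' ≤ C i j := antitone_nat_of_succ_le (fun n => h.m2 i n) hj
  omega

lemma Valid.le {a b ℓ : ℕ} {C : ℕ → ℕ → ℕ} (h : Valid a b ℓ C) (i j : ℕ) : C i j ≤ ℓ := by
  have := h.anti (Nat.zero_le i) (le_refl j)
  rw [h.z1] at this
  exact this

/-- labeling attached to a plane partition -/
def lab (a b ℓ : ℕ) (C : ℕ → ℕ → ℕ) : (Fin a × Fin b) × Fin ℓ → ℤ := fun p =>
  (p.1.1 : ℕ) + (p.1.2 : ℕ) + 1 + if (p.2 : ℕ) < C (p.1.1 + 1) (p.1.2 + 1) then 0 else 1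

lemma lab_strict {a b ℓ : ℕ} {C : ℕ → ℕ → ℕ} (h : Valid a b ℓ C) :
    IsPStrict (Fin a × Fin b) ℓ (a + b) (lab a b ℓ C) := by
  refine ⟨?_, ?_, ?_⟩
  · rintro ⟨x, y⟩ ⟨x', y'⟩ z hlt
    have h1 := hlt.le
    rw [Prod.mk_le_mk] at h1
    have hx : (x : ℕ) ≤ x' := h1.1
    have hy : (y : ℕ) ≤ y' := h1.2
    have hne : ¬ ((x : ℕ) = x' ∧ (y : ℕ) = y') := by
      rintro ⟨e1, e2⟩
      exact hlt.ne (Prod.ext (Fin.ext e1) (Fin.ext e2))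
    have := h.anti (Nat.succ_le_succ hx) (Nat.succ_le_succ hy)
    simp only [lab, Nat.succ_eq_add_one] at *
    split_ifs <;> omega
  · rintro ⟨x, y⟩ z z' hz
    have hz : (z : ℕ) ≤ z' := hz
    simp only [lab]
    split_ifs <;> omega
  · rintro ⟨x, y⟩ z
    have := x.2
    have := y.2
    simp only [lab]
    push_cast
    split_ifs <;> omega

lemma strict_lo {a b ℓ q : ℕ} {f : (Fin a × Fin b) × Fin ℓ → ℤ}
    (hf : IsPStrict (Fin a × Fin b) ℓ q f) (z : Fin ℓ) : ∀ (n : ℕ) (x : Fin a) (y : Fin b),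
    (x : ℕ) + y = n → (n : ℤ) + 1 ≤ f ((x, y), z) := by
  intro n
  induction n with
  | zero => intro x y _; have := (hf.2.2 (x, y) z).1; simpa using this
  | succ n ih =>
    intro x y hn
    by_cases hx : (x : ℕ) = 0
    · let y' : Fin b := ⟨y - 1, by omega⟩
      have h1 := ih x y' (by simp [y']; omega)
      have h2 := hf.1 (x, y') (x, y) z (by
        rw [Prod.mk_lt_mk_iff_right, Fin.lt_def]; simp [y']; omega)
      push_cast; omega
    · let x' : Fin a := ⟨x - 1, by omega⟩
      have h1 := ih x' y (by simp [x']; omega)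
      have h2 := hf.1 (x', y) (x, y) z (by
        rw [Prod.mk_lt_mk_iff_left, Fin.lt_def]; simp [x']; omega)
      push_cast; omega

lemma strict_hi {a b ℓ : ℕ} {f : (Fin a × Fin b) × Fin ℓ → ℤ}
    (hf : IsPStrict (Fin a × Fin b) ℓ (a + b) f) (z : Fin ℓ) : ∀ (n : ℕ) (x : Fin a) (y : Fin b),
    (x : ℕ) + y + n + 2 = a + b → f ((x, y), z) ≤ (x : ℕ) + (y : ℕ) + 2 := by
  intro n
  induction n with
  | zero => intro x y _; have := (hf.2.2 (x, y) z).2; push_cast at this; omega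
  | succ n ih =>
    intro x y hn
    by_cases hx : (x : ℕ) + 1 = a
    · let y' : Fin b := ⟨y + 1, by omega⟩
      have h1 := ih x y' (by simp [y']; omega)
      have h2 := hf.1 (x, y) (x, y') z (by
        rw [Prod.mk_lt_mk_iff_right, Fin.lt_def]; simp [y'])
      simp [y'] at h1 h2; omega
    · let x' : Fin a := ⟨x + 1, by omega⟩
      have h1 := ih x' y (by simp [x']; omega)
      have h2 := hf.1 (x, y) (x', y) z (by
        rw [Prod.mk_lt_mk_iff_left, Fin.lt_def]; simp [x'])
      simp [x'] at h1 h2; omega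

lemma strict_two {a b ℓ : ℕ} {f : (Fin a × Fin b) × Fin ℓ → ℤ}
    (hf : IsPStrict (Fin a × Fin b) ℓ (a + b) f) (x : Fin a) (y : Fin b) (z : Fin ℓ) :
    ((x : ℕ) : ℤ) + (y : ℕ) + 1 ≤ f ((x, y), z) ∧ f ((x, y), z) ≤ (x : ℕ) + (y : ℕ) + 2 := by
  refine ⟨?_, strict_hi hf z (a + b - 2 - x - y) x y (by omega)⟩
  have := strict_lo hf z _ x y rfl
  push_cast at this
  exact this

lemma cut {ℓ : ℕ} (p : Fin ℓ → Prop) (hp : ∀ z z', z ≤ z' → p z' → p z) :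
    ∃ n, n ≤ ℓ ∧ ∀ z : Fin ℓ, p z ↔ (z : ℕ) < n := by
  by_cases h : ∃ n, ∃ h : n < ℓ, ¬ p ⟨n, h⟩
  · refine ⟨Nat.find h, ?_, fun z => ?_⟩
    · exact (Nat.find_spec h).1.le
    · constructor
      · intro hz
        by_contra hlt
        push Not at hlt
        obtain ⟨h1, h2⟩ := Nat.find_spec h
        exact h2 (hp ⟨_, h1⟩ z hlt hz)
      · intro hz
        by_contra hn
        exact Nat.find_min h hz ⟨z.2, hn⟩
  · push Not at h
    exact ⟨ℓ, le_rfl, fun z => ⟨fun _ => z.2, fun _ => h z z.2⟩⟩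

lemma exists_C {a b ℓ : ℕ} {f : (Fin a × Fin b) × Fin ℓ → ℤ}
    (hf : IsPStrict (Fin a × Fin b) ℓ (a + b) f) : ∃ C, Valid a b ℓ C ∧ f = lab a b ℓ C := by
  have h1 : ∀ (x : Fin a) (y : Fin b), ∃ n, n ≤ ℓ ∧ ∀ z : Fin ℓ,
      f ((x, y), z) = (x : ℕ) + (y : ℕ) + 1 ↔ (z : ℕ) < n := by
    intro x y
    apply cut
    intro z z' hz h
    have := hf.2.1 (x, y) z z' hz
    have := strict_two hf x y z
    omega
  choose N hN hN' using h1
  let C : ℕ → ℕ → ℕ := fun i j => if i = 0 ∨ j = 0 then ℓ else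
    if h : i - 1 < a ∧ j - 1 < b then N ⟨i-1, h.1⟩ ⟨j-1, h.2⟩ else 0
  have hC : ∀ (x : Fin a) (y : Fin b), C (x+1) (y+1) = N x y := by
    intro x y
    simp [C]
  have hout : ∀ i j, 1 ≤ i → 1 ≤ j → (a < i ∨ b < j) → C i j = 0 := by
    intro i j hi hj h
    simp only [C]
    rw [if_neg (by omega), dif_neg (by omega)]
  have hle : ∀ i j, C i j ≤ ℓ := by
    intro i j
    simp only [C]
    split_ifs
    · rfl
    · exact hN _ _
    · omega
  have hmono : ∀ (x x' : Fin a) (y y' : Fin b), (x, y) < (x', y') →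
      (x' : ℕ) + y' = x + y + 1 → N x' y' ≤ N x y := by
    intro x x' y y' hlt he
    by_contra hcon
    push Not at hcon
    have hz : N x y < ℓ := lt_of_lt_of_le hcon (hN _ _)
    have e1 := (hN' x' y' ⟨_, hz⟩).2 hcon
    have e2 := hf.1 _ _ ⟨_, hz⟩ hlt
    have e3 := strict_two hf x y ⟨_, hz⟩
    have e4 := (hN' x y ⟨_, hz⟩).1 (by omega)
    simp at e4
  refine ⟨C, ⟨?_, ?_, hout, ?_, ?_⟩, ?_⟩
  · intro j; simp [C]
  · intro i; simp [C]
  · intro i j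
    by_cases h0 : i = 0 ∨ j = 0
    · have : C i j = ℓ := by simp only [C]; rw [if_pos h0]
      rw [this]; exact hle _ _
    by_cases h1 : a < i + 1 ∨ b < j
    · rw [hout (i+1) j (by omega) (by omega) h1]; omega
    have e1 := hC ⟨i-1, by omega⟩ ⟨j-1, by omega⟩
    have e2 := hC ⟨i, by omega⟩ ⟨j-1, by omega⟩
    simp only [show i - 1 + 1 = i by omega, show j - 1 + 1 = j by omega] at e1 e2
    rw [e1, e2]
    apply hmono
    · rw [Prod.mk_lt_mk_iff_left, Fin.lt_def]; simp; omega
    · simp; omega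
  · intro i j
    by_cases h0 : i = 0 ∨ j = 0
    · have : C i j = ℓ := by simp only [C]; rw [if_pos h0]
      rw [this]; exact hle _ _
    by_cases h1 : a < i ∨ b < j + 1
    · rw [hout i (j+1) (by omega) (by omega) h1]; omega
    have e1 := hC ⟨i-1, by omega⟩ ⟨j-1, by omega⟩
    have e2 := hC ⟨i-1, by omega⟩ ⟨j, by omega⟩
    simp only [show i - 1 + 1 = i by omega, show j - 1 + 1 = j by omega] at e1 e2
    rw [e1, e2]
    apply hmono
    · rw [Prod.mk_lt_mk_iff_right, Fin.lt_def]; simp; omega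
    · simp; omega
  · funext ⟨⟨x, y⟩, z⟩
    simp only [lab]
    rw [hC]
    have e1 := hN' x y z
    have e3 := strict_two hf x y z
    split_ifs with hz
    · rw [e1.2 hz]; ring
    · have : ¬ f ((x, y), z) = (x : ℕ) + (y : ℕ) + 1 := fun h => hz (e1.1 h)
      omega

lemma card_int {ℓ A B : ℕ} (hB : B ≤ ℓ) (p : Fin ℓ → Prop) [DecidablePred p]
    (hp : ∀ z, p z ↔ A ≤ (z : ℕ) ∧ (z : ℕ) < B) : (Finset.univ.filter p).card = B - A := by
  rw [← Nat.card_Ico, ← Finset.card_image_of_injective _ Fin.val_injective]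
  congr 1
  ext n
  simp only [Finset.mem_image, Finset.mem_filter, Finset.mem_univ, true_and, Finset.mem_Ico]
  constructor
  · rintro ⟨z, hz, rfl⟩
    exact (hp z).1 hz
  · intro hn
    exact ⟨⟨n, by omega⟩, (hp _).2 hn, rfl⟩

def upd (C : ℕ → ℕ → ℕ) (i j v : ℕ) : ℕ → ℕ → ℕ := fun i' j' =>
  if i' = i ∧ j' = j then v else C i' j'

lemma upd_valid {a b ℓ : ℕ} {C : ℕ → ℕ → ℕ} (h : Valid a b ℓ C) {i j v : ℕ}
    (hi : i + 1 ≤ a) (hj : j + 1 ≤ b) (h1 : C (i+2) (j+1) ≤ v) (h2 : C (i+1) (j+2) ≤ v)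
    (h3 : v ≤ C i (j+1)) (h4 : v ≤ C (i+1) j) : Valid a b ℓ (upd C (i+1) (j+1) v) := by
  refine ⟨fun j' => ?_, fun i' => ?_, fun i' j' hi' hj' ho => ?_, fun i' j' => ?_, fun i' j' => ?_⟩
  · rw [upd, if_neg (by omega)]; exact h.z1 _
  · rw [upd, if_neg (by omega)]; exact h.z2 _
  · rw [upd, if_neg (by omega)]; exact h.out _ _ hi' hj' ho
  · simp only [upd]
    split_ifs with e1 e2 e2
    · omega
    · obtain ⟨e1, rfl⟩ := e1; obtain rfl : i' = i := by omega
      exact h3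
    · obtain ⟨rfl, rfl⟩ := e2
      exact h1
    · exact h.m1 _ _
  · simp only [upd]
    split_ifs with e1 e2 e2
    · omega
    · obtain ⟨rfl, e1⟩ := e1; obtain rfl : j' = j := by omega
      exact h4
    · obtain ⟨rfl, rfl⟩ := e2
      exact h2
    · exact h.m2 _ _

/-- rank toggle -/
def tog (a b k : ℕ) (C : ℕ → ℕ → ℕ) : ℕ → ℕ → ℕ := fun i j =>
  if ((1 ≤ i ∧ i ≤ a) ∧ (1 ≤ j ∧ j ≤ b)) ∧ i + j = k + 1 then
    min (C (i-1) j) (C i (j-1)) + max (C (i+1) j) (C i (j+1)) - C i j else C i j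

lemma tog_valid {a b ℓ : ℕ} {C : ℕ → ℕ → ℕ} (h : Valid a b ℓ C) (k : ℕ) :
    Valid a b ℓ (tog a b k C) := by
  refine ⟨fun j' => ?_, fun i' => ?_, fun i' j' hi' hj' ho => ?_, fun i' j' => ?_, fun i' j' => ?_⟩
  · rw [tog, if_neg (by omega)]; exact h.z1 _
  · rw [tog, if_neg (by omega)]; exact h.z2 _
  · rw [tog, if_neg (by omega)]; exact h.out _ _ hi' hj' ho
  · have q0 := h.m1 i' j'
    simp only [tog]
    split_ifs with e1 e2 e2
    · omega
    · have q1 := h.m1 (i'+1) j'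
      have q2 := h.m2 (i'+1) j'
      simp only [Nat.add_sub_cancel]
      omega
    · obtain ⟨i, rfl⟩ : ∃ i, i' = i + 1 := ⟨i' - 1, by omega⟩
      obtain ⟨j, rfl⟩ : ∃ j, j' = j + 1 := ⟨j' - 1, by omega⟩
      have q1 := h.m1 i (j+1)
      have q2 := h.m2 (i+1) j
      simp only [Nat.add_sub_cancel]
      omega
    · exact q0
  · have q0 := h.m2 i' j'
    simp only [tog]
    split_ifs with e1 e2 e2
    · omega
    · have q1 := h.m2 i' (j'+1)
      have q2 := h.m1 i' (j'+1)
      simp only [Nat.add_sub_cancel]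
      omega
    · obtain ⟨i, rfl⟩ : ∃ i, i' = i + 1 := ⟨i' - 1, by omega⟩
      obtain ⟨j, rfl⟩ : ∃ j, j' = j + 1 := ⟨j' - 1, by omega⟩
      have q1 := h.m1 i (j+1)
      have q2 := h.m2 (i+1) j
      simp only [Nat.add_sub_cancel]
      omega
    · exact q0

lemma lab_upd_off {a b ℓ : ℕ} (C : ℕ → ℕ → ℕ) (x : Fin a) (y : Fin b) (v : ℕ)
    (p' : Fin a × Fin b) (i' : Fin ℓ) (h : p' ≠ (x, y)) :
    lab a b ℓ (upd C (x+1) (y+1) v) (p', i') = lab a b ℓ C (p', i') := by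
  have : ¬ ((p'.1 : ℕ) + 1 = x + 1 ∧ (p'.2 : ℕ) + 1 = y + 1) := by
    rintro ⟨e1, e2⟩
    exact h (Prod.ext (Fin.ext (by show (p'.1 : ℕ) = x; omega)) (Fin.ext (by show (p'.2 : ℕ) = y; omega)))
  simp only [lab, upd, this, if_false]

lemma free1 {a b ℓ : ℕ} {C : ℕ → ℕ → ℕ} (h : Valid a b ℓ C) (k : ℕ) (x : Fin a) (y : Fin b)
    (z : Fin ℓ) : (lab a b ℓ C ((x, y), z) = (k : ℤ) ∧
      Raisable (Fin a × Fin b) ℓ (a + b) (lab a b ℓ C) (x, y) z) ↔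
      ((x : ℕ) + y + 1 = k ∧ max (C (x+2) (y+1)) (C (x+1) (y+2)) ≤ z ∧ (z : ℕ) < C (x+1) (y+1)) := by
  have hx := x.2
  have hy := y.2
  constructor
  · rintro ⟨h1, g, hg, h2, h3⟩
    have g2 := strict_two hg x y z
    simp only [lab] at h1 h2
    have hz : (z : ℕ) < C (x+1) (y+1) := by
      by_contra hz
      rw [if_neg hz] at h2
      omega
    rw [if_pos hz] at h1 h2
    refine ⟨by omega, ?_, hz⟩
    by_contra hcon
    rw [not_le, lt_max_iff] at hcon
    rcases hcon with hcon | hcon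
    · have hx' : (x : ℕ) + 1 < a := by
        by_contra hx'
        rw [h.out (x+2) (y+1) (by omega) (by omega) (by omega)] at hcon
        omega
      have e1 := h3 (⟨x+1, hx'⟩, y) z (by
        intro e; have := congrArg (fun p => (p.1 : ℕ)) e; simp at this)
      have e2 := hg.1 (x, y) (⟨x+1, hx'⟩, y) z (by
        rw [Prod.mk_lt_mk_iff_left, Fin.lt_def]; simp)
      simp only [lab] at e1
      rw [if_pos hcon] at e1
      push_cast at e1
      omega
    · have hy' : (y : ℕ) + 1 < b := by
        by_contra hy'
        rw [h.out (x+1) (y+2) (by omega) (by omega) (by omega)] at hcon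
        omega
      have e1 := h3 (x, ⟨y+1, hy'⟩) z (by
        intro e; have := congrArg (fun p => (p.2 : ℕ)) e; simp at this)
      have e2 := hg.1 (x, y) (x, ⟨y+1, hy'⟩) z (by
        rw [Prod.mk_lt_mk_iff_right, Fin.lt_def]; simp)
      simp only [lab] at e1
      rw [if_pos hcon] at e1
      push_cast at e1
      omega
  · rintro ⟨h1, h2, h3⟩
    refine ⟨by simp only [lab]; rw [if_pos h3]; omega,
      lab a b ℓ (upd C (x+1) (y+1) (max (C (x+2) (y+1)) (C (x+1) (y+2)))), ?_, ?_, ?_⟩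
    · have q1 := h.m1 (x+1) (y+1)
      have q2 := h.m2 (x+1) (y+1)
      have q3 := h.m1 x (y+1)
      have q4 := h.m2 (x+1) y
      exact lab_strict (upd_valid h (by omega) (by omega) (le_max_left _ _) (le_max_right _ _)
        (max_le (by omega) (by omega)) (max_le (by omega) (by omega)))
    · simp only [lab, upd, and_self, if_true]
      rw [if_pos h3, if_neg (by omega)]; omega
    · intro p' i' hp'
      exact lab_upd_off C x y _ p' i' hp'

lemma free2 {a b ℓ : ℕ} {C : ℕ → ℕ → ℕ} (h : Valid a b ℓ C) (k : ℕ) (x : Fin a) (y : Fin b)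
    (z : Fin ℓ) : (lab a b ℓ C ((x, y), z) = (k : ℤ) + 1 ∧
      Lowerable (Fin a × Fin b) ℓ (a + b) (lab a b ℓ C) (x, y) z) ↔
      ((x : ℕ) + y + 1 = k ∧ C (x+1) (y+1) ≤ z ∧ (z : ℕ) < min (C x (y+1)) (C (x+1) y)) := by
  have hx := x.2
  have hy := y.2
  constructor
  · rintro ⟨h1, g, hg, h2, h3⟩
    have g2 := strict_two hg x y z
    simp only [lab] at h1 h2
    have hz : ¬ (z : ℕ) < C (x+1) (y+1) := by
      intro hz
      rw [if_pos hz] at h2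
      omega
    rw [if_neg hz] at h1 h2
    refine ⟨by omega, by omega, ?_⟩
    by_contra hcon
    rw [not_lt, min_le_iff] at hcon
    rcases hcon with hcon | hcon
    · have hx' : (x : ℕ) ≠ 0 := by
        intro hx'
        rw [hx', h.z1] at hcon
        omega
      have e1 := h3 (⟨x-1, by omega⟩, y) z (by
        intro e; have := congrArg (fun p => (p.1 : ℕ)) e; simp at this; omega)
      have e2 := hg.1 (⟨x-1, by omega⟩, y) (x, y) z (by
        rw [Prod.mk_lt_mk_iff_left, Fin.lt_def]; simp; omega)
      simp only [lab] at e1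
      rw [show (x : ℕ) - 1 + 1 = x by omega, if_neg (by omega)] at e1
      omega
    · have hy' : (y : ℕ) ≠ 0 := by
        intro hy'
        rw [hy', h.z2] at hcon
        omega
      have e1 := h3 (x, ⟨y-1, by omega⟩) z (by
        intro e; have := congrArg (fun p => (p.2 : ℕ)) e; simp at this; omega)
      have e2 := hg.1 (x, ⟨y-1, by omega⟩) (x, y) z (by
        rw [Prod.mk_lt_mk_iff_right, Fin.lt_def]; simp; omega)
      simp only [lab] at e1
      rw [show (y : ℕ) - 1 + 1 = y by omega, if_neg (by omega)] at e1
      omega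
  · rintro ⟨h1, h2, h3⟩
    refine ⟨by simp only [lab]; rw [if_neg (by omega)]; omega,
      lab a b ℓ (upd C (x+1) (y+1) (min (C x (y+1)) (C (x+1) y))), ?_, ?_, ?_⟩
    · have q1 : C (x+2) (y+1) ≤ C (x+1) (y+1) := h.m1 (x+1) (y+1)
      have q2 : C (x+1) (y+2) ≤ C (x+1) (y+1) := h.m2 (x+1) (y+1)
      have q3 := h.m1 x (y+1)
      have q4 := h.m2 (x+1) y
      exact lab_strict (upd_valid h (by omega) (by omega) (le_min (by omega) (by omega))
        (le_min (by omega) (by omega)) (min_le_left _ _) (min_le_right _ _))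
    · simp only [lab, upd, and_self, if_true]
      rw [if_pos h3, if_neg (by omega)]; omega
    · intro p' i' hp'
      exact lab_upd_off C x y _ p' i' hp'

lemma bk_lab {a b ℓ : ℕ} {C : ℕ → ℕ → ℕ} (h : Valid a b ℓ C) (k : ℕ) :
    bkP (Fin a × Fin b) ℓ (a + b) (k : ℤ) (lab a b ℓ C) = lab a b ℓ (tog a b k C) := by
  funext ⟨⟨x, y⟩, z⟩
  have hx := x.2
  have hy := y.2
  have q1 := h.m1 (x+1) (y+1)
  have q2 := h.m2 (x+1) (y+1)
  have q3 := h.m1 x (y+1)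
  have q4 := h.m2 (x+1) y
  have q5 := h.le x (y+1)
  simp only [bkP, free1 h, free2 h]
  by_cases hk : (x : ℕ) + y + 1 = k
  · simp only [hk, true_and]
    have ht : tog a b k C (x+1) (y+1) = min (C x (y+1)) (C (x+1) y) +
        max (C (x+2) (y+1)) (C (x+1) (y+2)) - C (x+1) (y+1) := by
      rw [tog, if_pos (by omega)]; rfl
    have hM : max (C (x+2) (y+1)) (C (x+1) (y+2)) ≤ C (x+1) (y+1) := max_le q1 q2
    have hm : C (x+1) (y+1) ≤ min (C x (y+1)) (C (x+1) y) := le_min q3 q4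
    have hmℓ : min (C x (y+1)) (C (x+1) y) ≤ ℓ := (min_le_left _ _).trans q5
    simp only [lab, ht]
    generalize max (C (x+2) (y+1)) (C (x+1) (y+2)) = M at *
    generalize min (C x (y+1)) (C (x+1) y) = m at *
    generalize C (x+1) (y+1) = c at *
    by_cases hf : (M ≤ (z : ℕ) ∧ (z : ℕ) < c) ∨ (c ≤ (z : ℕ) ∧ (z : ℕ) < m)
    · rw [if_pos hf, card_int (A := M) (B := (z : ℕ) + 1) (by omega) _ (by
        intro w
        rw [Fin.le_def]
        omega), card_int (A := c) (B := m) hmℓ _ (by intro w; rfl)]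
      split_ifs <;> omega
    · rw [if_neg hf]
      split_ifs <;> omega
  · simp only [hk, false_and, or_self, if_false]
    have ht : tog a b k C (x+1) (y+1) = C (x+1) (y+1) := by
      rw [tog, if_neg (by omega)]
    simp only [lab, ht]

/-- composition of the first `n` toggles -/
def TT (a b : ℕ) (C : ℕ → ℕ → ℕ) : ℕ → ℕ → ℕ → ℕ
  | 0 => C
  | n + 1 => tog a b (n+1) (TT a b C n)

lemma TT_valid {a b ℓ : ℕ} {C : ℕ → ℕ → ℕ} (h : Valid a b ℓ C) (n : ℕ) :
    Valid a b ℓ (TT a b C n) := by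
  induction n with
  | zero => exact h
  | succ n ih => exact tog_valid ih _

def proC (a b : ℕ) (C : ℕ → ℕ → ℕ) : ℕ → ℕ → ℕ := TT a b C (a + b - 1)

lemma pro_lab {a b ℓ : ℕ} {C : ℕ → ℕ → ℕ} (h : Valid a b ℓ C) :
    proP (Fin a × Fin b) ℓ (a + b) (lab a b ℓ C) = lab a b ℓ (proC a b C) := by
  have hl : ∀ l : List ℕ, (do let i ← l; pure (i : ℤ) : List ℤ) = l.map (fun i : ℕ => (i : ℤ)) := by
    intro l
    induction l with
    | nil => rfl
    | cons x l ih => simpa using ih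
  unfold proP proC
  rw [hl, List.foldl_map]
  generalize a + b - 1 = n
  induction n with
  | zero => rfl
  | succ n ih =>
    rw [List.range_succ, List.foldl_append, ih]
    simp only [List.foldl_cons, List.foldl_nil, TT]
    have := bk_lab (TT_valid h n) (n+1)
    rw [← this]
    push_cast
    rfl

lemma TT_old (a b : ℕ) (C : ℕ → ℕ → ℕ) (n i j : ℕ) (h : n + 1 < i + j) :
    TT a b C n i j = C i j := by
  induction n with
  | zero => rfl
  | succ n ih => rw [TT, tog, if_neg (by omega)]; exact ih (by omega)

lemma TT_new (a b : ℕ) (C : ℕ → ℕ → ℕ) (n d i j : ℕ) (h : i + j ≤ n + 1) :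
    TT a b C (n+d) i j = TT a b C n i j := by
  induction d with
  | zero => rfl
  | succ d ih => rw [← add_assoc, TT, tog, if_neg (by omega)]; exact ih

lemma proC_rec {a b ℓ : ℕ} {C : ℕ → ℕ → ℕ} (h : Valid a b ℓ C) (i j : ℕ) (hi : 1 ≤ i) (hia : i ≤ a)
    (hj : 1 ≤ j) (hjb : j ≤ b) : proC a b C i j + C i j =
    min (proC a b C (i-1) j) (proC a b C i (j-1)) + max (C (i+1) j) (C i (j+1)) := by
  obtain ⟨n, hn⟩ : ∃ n, i + j = n + 2 := ⟨i + j - 2, by omega⟩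
  obtain ⟨d, hd⟩ : ∃ d, a + b - 1 = n + 1 + d := ⟨a + b - 1 - (n+1), by omega⟩
  have e1 : proC a b C i j = TT a b C (n+1) i j := by
    rw [proC, hd, TT_new]; omega
  have e2 : proC a b C (i-1) j = TT a b C n (i-1) j := by
    rw [proC, hd, add_assoc, TT_new]; omega
  have e3 : proC a b C i (j-1) = TT a b C n i (j-1) := by
    rw [proC, hd, add_assoc, TT_new]; omega
  rw [e1, e2, e3, TT, tog, if_pos (by omega), TT_old a b C n i j (by omega),
    TT_old a b C n (i+1) j (by omega), TT_old a b C n i (j+1) (by omega)]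
  have v := TT_valid h n
  have q1 := v.m1 (i-1) j
  have q2 := v.m2 i (j-1)
  rw [show i - 1 + 1 = i by omega] at q1
  rw [show j - 1 + 1 = j by omega] at q2
  rw [TT_old a b C n i j (by omega)] at q1 q2
  omega

lemma iter_valid {a b ℓ : ℕ} {C : ℕ → ℕ → ℕ} (h : Valid a b ℓ C) (t : ℕ) :
    Valid a b ℓ ((proC a b)^[t] C) := by
  induction t with
  | zero => exact h
  | succ t ih => rw [Function.iterate_succ_apply']; exact TT_valid ih _

lemma iter_lab {a b ℓ : ℕ} {C : ℕ → ℕ → ℕ} (h : Valid a b ℓ C) (t : ℕ) :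
    (proP (Fin a × Fin b) ℓ (a + b))^[t] (lab a b ℓ C) = lab a b ℓ ((proC a b)^[t] C) := by
  induction t with
  | zero => rfl
  | succ t ih =>
    rw [Function.iterate_succ_apply', Function.iterate_succ_apply', ih, pro_lab (iter_valid h t)]

lemma C_recip {a b ℓ : ℕ} {C : ℕ → ℕ → ℕ} (h : Valid a b ℓ C) (t i j : ℕ) (hh : In a b i j) :
    (proC a b)^[t+i+j-1] C (a+1-i) (b+1-j) + (proC a b)^[t] C i j = ℓ := by
  obtain ⟨⟨hi, hia⟩, hj, hjb⟩ := id hh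
  have key := trop_recip (a := a) (b := b) (ℓ := ℓ)
    (fun t i j => ((proC a b)^[t] C (a+1-i) (b+1-j) : ℤ)) ?_ ?_ t i j hh
  · simp only [show a + 1 - (a + 1 - i) = i by omega, show b + 1 - (b + 1 - j) = j by omega] at key
    exact_mod_cast key
  · intro t
    have v := iter_valid h t
    refine ⟨fun i j => by positivity, fun i j => by exact_mod_cast v.le _ _, ?_, ?_, ?_, ?_⟩
    · intro j h1 h2
      exact_mod_cast v.out _ _ (by omega) (by omega) (by omega)
    · intro j h1 h2
      exact_mod_cast v.out _ _ (by omega) (by omega) (by omega)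
    · intro j h1 h2
      simp [v.z1]
    · intro j h1 h2
      simp [v.z2]
  · rintro t i j ⟨⟨hi, hia⟩, hj, hjb⟩
    have r := proC_rec (iter_valid h t) (a+1-i) (b+1-j) (by omega) (by omega) (by omega) (by omega)
    rw [← Function.iterate_succ_apply' (proC a b) t C] at r
    simp only [show a + 1 - (i+1) = a + 1 - i - 1 by omega, show b + 1 - (j+1) = b + 1 - j - 1 by omega,
      show a + 1 - (i-1) = a + 1 - i + 1 by omega, show b + 1 - (j-1) = b + 1 - j + 1 by omega]
    exact_mod_cast r

lemma lab_recip {a b ℓ : ℕ} {C : ℕ → ℕ → ℕ} (h : Valid a b ℓ C) (x : Fin a) (y : Fin b)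
    (z : Fin ℓ) (t : ℕ) :
    lab a b ℓ ((proC a b)^[t + x + y + 1] C) ((x.rev, y.rev), z.rev) =
      (a : ℤ) + b + 1 - lab a b ℓ ((proC a b)^[t] C) ((x, y), z) := by
  have hx := x.2
  have hy := y.2
  have hz := z.2
  have r := C_recip h t (x+1) (y+1) ⟨by omega, by omega⟩
  rw [show t + ((x : ℕ) + 1) + (y + 1) - 1 = t + x + y + 1 by omega] at r
  rw [show a + 1 - ((x : ℕ) + 1) = a - (x + 1) + 1 by omega,
    show b + 1 - ((y : ℕ) + 1) = b - (y + 1) + 1 by omega] at r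
  simp only [lab, Fin.val_rev]
  split_ifs <;> omega

lemma map_shift (u : ℕ → ℤ) (n : ℕ) (hu : ∀ t, u (t + n) = u t) (r : ℕ) :
    (Multiset.range n).map (fun t => u (t + r)) = (Multiset.range n).map u := by
  induction r with
  | zero => rfl
  | succ r ih =>
    rw [← ih]
    have key : ∀ (v : ℕ → ℤ) n, v 0 ::ₘ (Multiset.range n).map (fun t => v (t+1)) =
        v n ::ₘ (Multiset.range n).map v := by
      intro v n
      induction n with
      | zero => rfl
      | succ n ih2 =>
        rw [Multiset.range_succ, Multiset.map_cons, Multiset.map_cons, Multiset.cons_swap, ih2]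
    have k := key (fun t => u (t + r)) n
    simp only [zero_add] at k
    rw [show n + r = r + n by omega, hu r, Multiset.cons_inj_right] at k
    rw [← k]
    refine Multiset.map_congr rfl (fun t _ => ?_)
    congr 1; omega

end PS

theorem pstrict_dist_antipodal (a b ℓ : ℕ)
    (f : (Fin a × Fin b) × Fin ℓ → ℤ)
    (hf : IsPStrict (Fin a × Fin b) ℓ (a + b) f)
    (x : Fin a) (y : Fin b) (z : Fin ℓ) :
    DistP a b ℓ f ((x.rev, y.rev), z.rev) =
      (DistP a b ℓ f ((x, y), z)).map (fun m => (a : ℤ) + b + 1 - m) := by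
  obtain ⟨C, hC, rfl⟩ := PS.exists_C hf
  unfold DistP
  simp only [PS.iter_lab hC, Multiset.map_map, Function.comp_def]
  have hx := x.2
  have hy := y.2
  have r1 := PS.lab_recip hC x y z
  have r2 := PS.lab_recip hC x.rev y.rev z.rev
  simp only [Fin.rev_rev, Fin.val_rev] at r2
  have per : ∀ t, PS.lab a b ℓ ((PS.proC a b)^[t + (a + b)] C) ((x.rev, y.rev), z.rev) =
      PS.lab a b ℓ ((PS.proC a b)^[t] C) ((x.rev, y.rev), z.rev) := by
    intro t
    have e := r1 (t + (a - (x+1)) + (b - (y+1)) + 1)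
    rw [r2 t] at e
    rw [show t + (a + b) = t + (a - (x+1)) + (b - (y+1)) + 1 + x + y + 1 by omega, e]
    ring
  rw [← PS.map_shift _ (a + b) per ((x : ℕ) + y + 1)]
  refine Multiset.map_congr rfl (fun t _ => ?_)
  rw [← r1 t]
  simp only [add_assoc]
end

section
/- Let S = {p, p*} where p and p* are antipodal elements of [a] × [b] × [ℓ], and let χ_S(f) = f(p) + f(p*). Then the triple (L_{([a]×[b])×[ℓ]}(R^{a+b}), Pro, χ_S) is (a+b+1)-mesic: the average of χ_S over every promotion orbit equals a+b+1. -/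
open scoped Classical

namespace RBiro

/-- lower sum with value `c` at the bottom -/
def lo (c : ℝ) (F : ℕ → ℕ → ℝ) : ℕ → ℕ → ℝ
  | 0, 0 => c
  | i+1, 0 => F i 0
  | 0, j+1 => F 0 j
  | i+1, j+1 => F i (j+1) + F (i+1) j

/-- upper sum with value `c` at the top -/
noncomputable def up (a b : ℕ) (c : ℝ) (G : ℕ → ℕ → ℝ) (i j : ℕ) : ℝ :=
  if i + 1 < a then (if j + 1 < b then G (i+1) j + G i (j+1) else G (i+1) j)
  else (if j + 1 < b then G i (j+1) else c)

lemma lo_pos {c : ℝ} (hc : 0 < c) {F : ℕ → ℕ → ℝ} (hF : ∀ i j, 0 < F i j) (i j : ℕ) :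
    0 < lo c F i j := by
  rcases i with _ | i <;> rcases j with _ | j <;> simp only [lo]
  · exact hc
  · exact hF _ _
  · exact hF _ _
  · exact add_pos (hF _ _) (hF _ _)

lemma up_pos {a b : ℕ} {c : ℝ} (hc : 0 < c) {F : ℕ → ℕ → ℝ} (hF : ∀ i j, 0 < F i j) (i j : ℕ) :
    0 < up a b c F i j := by
  unfold up
  split_ifs
  · exact add_pos (hF _ _) (hF _ _)
  · exact hF _ _
  · exact hF _ _
  · exact hc

/-- cover matrix -/
def D (a b : ℕ) : Matrix (Fin a × Fin b) (Fin a × Fin b) ℝ := fun u v =>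
  (if u.1.val = v.1.val + 1 ∧ u.2.val = v.2.val then 1 else 0) +
  (if u.1.val = v.1.val ∧ u.2.val = v.2.val + 1 then 1 else 0)

lemma sum_single' (a b m n : ℕ) (φ : ℕ → ℕ → ℝ) :
    ∑ s : Fin a × Fin b, (if s.1.val = m ∧ s.2.val = n then φ s.1 s.2 else 0) =
      if m < a ∧ n < b then φ m n else 0 := by
  split_ifs with h
  · rw [Finset.sum_eq_single (⟨m, h.1⟩, ⟨n, h.2⟩)]
    · simp
    · rintro ⟨s1, s2⟩ _ hne
      rw [if_neg]
      rintro ⟨h1, h2⟩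
      apply hne
      ext <;> simp_all
    · simp
  · apply Finset.sum_eq_zero
    rintro ⟨s1, s2⟩ _
    rw [if_neg]
    rintro ⟨h1, h2⟩
    apply h
    simp only at h1 h2
    exact ⟨h1 ▸ s1.2, h2 ▸ s2.2⟩

lemma sum_D_left (a b : ℕ) (u : Fin a × Fin b) (φ : ℕ → ℕ → ℝ) :
    ∑ s : Fin a × Fin b, D a b u s * φ s.1 s.2 = lo 0 φ u.1 u.2 := by
  obtain ⟨⟨i, hi⟩, ⟨j, hj⟩⟩ := u
  simp only [D, add_mul, ite_mul, one_mul, zero_mul, Finset.sum_add_distrib]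
  rcases i with _ | i <;> rcases j with _ | j <;> simp only [lo]
  · simp
  · have := sum_single' a b 0 j φ
    rw [if_pos ⟨hi, by omega⟩] at this
    rw [← this]
    simp [eq_comm]
  · have := sum_single' a b i 0 φ
    rw [if_pos ⟨by omega, hj⟩] at this
    rw [← this]
    simp [eq_comm]
  · have h1 := sum_single' a b i (j+1) φ
    have h2 := sum_single' a b (i+1) j φ
    rw [if_pos ⟨by omega, by omega⟩] at h1 h2
    rw [← h1, ← h2]
    simp [eq_comm]

lemma sum_D_right (a b : ℕ) (v : Fin a × Fin b) (φ : ℕ → ℕ → ℝ) :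
    ∑ s : Fin a × Fin b, φ s.1 s.2 * D a b s v = up a b 0 φ v.1 v.2 := by
  obtain ⟨⟨i, hi⟩, ⟨j, hj⟩⟩ := v
  simp only [D, mul_add, mul_ite, mul_one, mul_zero, Finset.sum_add_distrib]
  rw [sum_single' a b (i+1) j φ, sum_single' a b i (j+1) φ]
  simp only [up, hi, hj, and_true, true_and]
  split_ifs <;> simp

lemma nilp (a b : ℕ) (c d : Fin a × Fin b → ℝ) (n : ℕ) : ∀ u v : Fin a × Fin b,
    ((Matrix.diagonal c * D a b * Matrix.diagonal d) ^ n) u v ≠ 0 →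
      u.1.val + u.2.val = v.1.val + v.2.val + n := by
  induction n with
  | zero =>
    intro u v h
    rw [pow_zero, Matrix.one_apply] at h
    have : u = v := by by_contra hh; simp [hh] at h
    simp [this]
  | succ n ih =>
    intro u v h
    rw [pow_succ, Matrix.mul_apply] at h
    obtain ⟨s, _, hs⟩ := Finset.exists_ne_zero_of_sum_ne_zero h
    have h1 := ih u s (left_ne_zero_of_mul hs)
    have h2 := right_ne_zero_of_mul hs
    rw [Matrix.mul_diagonal, Matrix.diagonal_mul] at h2
    have h3 : D a b s v ≠ 0 := right_ne_zero_of_mul (left_ne_zero_of_mul h2)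
    unfold D at h3
    split_ifs at h3 <;> first | omega | simp at h3

lemma isUnit_gen (a b : ℕ) (c d : Fin a × Fin b → ℝ) :
    IsUnit (1 - Matrix.diagonal c * D a b * Matrix.diagonal d).det := by
  rw [← Matrix.isUnit_iff_isUnit_det]
  apply IsNilpotent.isUnit_one_sub
  refine ⟨a + b, ?_⟩
  ext u v
  by_contra h
  have := nilp a b c d (a+b) u v h
  omega

lemma isUnit_l (a b : ℕ) (c : Fin a × Fin b → ℝ) :
    IsUnit (1 - Matrix.diagonal c * D a b).det := by
  have := isUnit_gen a b c 1
  simpa using this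

lemma isUnit_r (a b : ℕ) (c : Fin a × Fin b → ℝ) :
    IsUnit (1 - D a b * Matrix.diagonal c).det := by
  have := isUnit_gen a b 1 c
  simpa using this

/-- path-sum matrix -/
noncomputable def PM (a b : ℕ) (c : Fin a × Fin b → ℝ) :
    Matrix (Fin a × Fin b) (Fin a × Fin b) ℝ :=
  (1 - Matrix.diagonal c * D a b)⁻¹ * Matrix.diagonal c

lemma PM_eq (a b : ℕ) (c : Fin a × Fin b → ℝ) :
    PM a b c = Matrix.diagonal c * (1 - D a b * Matrix.diagonal c)⁻¹ := by
  unfold PM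
  have hl := isUnit_l a b c
  have hr := isUnit_r a b c
  have key : (1 - Matrix.diagonal c * D a b) * Matrix.diagonal c =
      Matrix.diagonal c * (1 - D a b * Matrix.diagonal c) := by noncomm_ring
  calc (1 - Matrix.diagonal c * D a b)⁻¹ * Matrix.diagonal c
      = (1 - Matrix.diagonal c * D a b)⁻¹ * (Matrix.diagonal c * (1 - D a b * Matrix.diagonal c))
          * (1 - D a b * Matrix.diagonal c)⁻¹ := by
        rw [Matrix.mul_assoc, Matrix.mul_assoc, Matrix.mul_nonsing_inv _ hr, Matrix.mul_one]
    _ = _ := by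
        rw [← key, ← Matrix.mul_assoc, Matrix.nonsing_inv_mul _ hl, Matrix.one_mul]

noncomputable def Aw (a b : ℕ) (F : ℕ → ℕ → ℝ) (u : Fin a × Fin b) : ℝ :=
  F u.1 u.2 / lo 1 F u.1 u.2

noncomputable def Vw (a b : ℕ) (Q : ℝ) (F : ℕ → ℕ → ℝ) (u : Fin a × Fin b) : ℝ :=
  (F u.1 u.2 * up a b Q⁻¹ (fun i j => (F i j)⁻¹) u.1 u.2)⁻¹

lemma lo_add (F : ℕ → ℕ → ℝ) (i j : ℕ) :
    lo 1 F i j = lo 0 F i j + if i = 0 ∧ j = 0 then 1 else 0 := by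
  rcases i with _ | i <;> rcases j with _ | j <;> simp [lo]

lemma up_add (a b : ℕ) (c : ℝ) (F : ℕ → ℕ → ℝ) (i j : ℕ) (hi : i < a) (hj : j < b) :
    up a b c F i j = up a b 0 F i j + if a - 1 = i ∧ b - 1 = j then c else 0 := by
  unfold up
  split_ifs <;> first | omega | simp

lemma PA_bot (a b : ℕ) (F : ℕ → ℕ → ℝ) (hF : ∀ i j, 0 < F i j) (u : Fin a × Fin b)
    (ha : 0 < a) (hb : 0 < b) :
    PM a b (Aw a b F) u (⟨0, ha⟩, ⟨0, hb⟩) = F u.1 u.2 := by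
  set e : Fin a × Fin b → ℝ := Pi.single (⟨0, ha⟩, ⟨0, hb⟩) 1 with he
  have key : (1 - Matrix.diagonal (Aw a b F) * D a b).mulVec (fun u => F u.1 u.2) =
      (Matrix.diagonal (Aw a b F)).mulVec e := by
    rw [Matrix.sub_mulVec, Matrix.one_mulVec, ← Matrix.mulVec_mulVec]
    ext v
    rw [Pi.sub_apply, Matrix.mulVec_diagonal, Matrix.mulVec_diagonal]
    have := sum_D_left a b v F
    rw [Matrix.mulVec, dotProduct, this]
    have h2 := lo_add F v.1 v.2
    have h3 : e v = if v.1.val = 0 ∧ v.2.val = 0 then 1 else 0 := by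
      obtain ⟨⟨i, hi⟩, ⟨j, hj⟩⟩ := v
      simp [he, Pi.single_apply]
    rw [h3]
    have h4 := lo_pos one_pos hF v.1 v.2
    have : Aw a b F v * lo 1 F v.1 v.2 = F v.1 v.2 := by
      unfold Aw; field_simp
    rw [h2] at this
    linarith
  have : (PM a b (Aw a b F)).mulVec e = fun u => F u.1 u.2 := by
    unfold PM
    rw [← Matrix.mulVec_mulVec, ← key, Matrix.mulVec_mulVec,
      Matrix.nonsing_inv_mul _ (isUnit_l _ _ _), Matrix.one_mulVec]
  have h5 := congrFun this u
  rw [he, Matrix.mulVec_single_one] at h5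
  exact h5

lemma PV_top (a b : ℕ) (Q : ℝ) (hQ : 0 < Q) (F : ℕ → ℕ → ℝ) (hF : ∀ i j, 0 < F i j)
    (v : Fin a × Fin b) (ha : a - 1 < a) (hb : b - 1 < b) :
    PM a b (Vw a b Q F) (⟨a-1, ha⟩, ⟨b-1, hb⟩) v = Q / F v.1 v.2 := by
  set e : Fin a × Fin b → ℝ := Pi.single (⟨a-1, ha⟩, ⟨b-1, hb⟩) 1 with he
  have key : (Matrix.vecMul (fun u => Q⁻¹⁻¹ * (F u.1 u.2)⁻¹)
      (1 - D a b * Matrix.diagonal (Vw a b Q F))) =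
      Matrix.vecMul e (Matrix.diagonal (Vw a b Q F)) := by
    rw [Matrix.vecMul_sub, Matrix.vecMul_one, ← Matrix.vecMul_vecMul]
    ext v
    rw [Pi.sub_apply, Matrix.vecMul_diagonal, Matrix.vecMul_diagonal]
    have := sum_D_right a b v (fun i j => Q⁻¹⁻¹ * (F i j)⁻¹)
    rw [Matrix.vecMul, dotProduct, this]
    have h2 := up_add a b Q⁻¹ (fun i j => (F i j)⁻¹) v.1 v.2 v.1.2 v.2.2
    have h2' : up a b 0 (fun i j => Q⁻¹⁻¹ * (F i j)⁻¹) v.1 v.2 =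
      Q * up a b 0 (fun i j => (F i j)⁻¹) v.1 v.2 := by
      unfold up; simp only [inv_inv]; split_ifs <;> ring
    have h3 : e v = if a - 1 = v.1.val ∧ b - 1 = v.2.val then 1 else 0 := by
      obtain ⟨⟨i, hi⟩, ⟨j, hj⟩⟩ := v
      simp [he, Pi.single_apply, eq_comm]
    have h3' : (if a - 1 = v.1.val ∧ b - 1 = v.2.val then Q⁻¹ else 0) = Q⁻¹ * e v := by
      rw [h3]; split_ifs <;> simp
    rw [h3'] at h2
    have h4 := up_pos (a := a) (b := b) (inv_pos.2 hQ) (fun i j => inv_pos.2 (hF i j)) v.1 v.2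
    have : Vw a b Q F v * up a b Q⁻¹ (fun i j => (F i j)⁻¹) v.1 v.2 = (F v.1 v.2)⁻¹ := by
      unfold Vw
      have := hF v.1 v.2
      generalize up a b Q⁻¹ (fun i j => (F i j)⁻¹) v.1 v.2 = U at h4 ⊢
      field_simp
    rw [h2'] 
    rw [h2] at this
    rw [← this]
    simp only [inv_inv]
    field_simp
    ring
  have : Matrix.vecMul e (PM a b (Vw a b Q F)) = fun u => Q⁻¹⁻¹ * (F u.1 u.2)⁻¹ := by
    rw [PM_eq]
    rw [← Matrix.vecMul_vecMul, ← key, Matrix.vecMul_vecMul,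
      Matrix.mul_nonsing_inv _ (isUnit_r _ _ _), Matrix.vecMul_one]
  have h5 := congrFun this v
  rw [he, Matrix.single_one_vecMul] at h5
  rw [div_eq_mul_inv]
  simpa using h5

/-- jump indicator -/
noncomputable def J (s1 s2 v1 v2 : ℕ) : ℝ := if s1 + s2 = v1 + v2 + 1 ∧ v1 < s1 then 1 else 0

noncomputable def W (a b : ℕ) (F : ℕ → ℕ → ℝ) : Matrix (Fin a × Fin b) (Fin a × Fin b) ℝ :=
  fun s v => F s.1 s.2 * J s.1 s.2 v.1 v.2 * (F v.1 v.2)⁻¹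

lemma lo_J_full (F : ℕ → ℕ → ℝ) (i j k l : ℕ) (h : i + j = k + l + 2) (hk : k + 2 ≤ i) :
    lo 0 (fun s1 s2 => F s1 s2 * J s1 s2 k l) i j = lo 1 F i j := by
  rcases i with _ | i
  · omega
  rcases j with _ | j <;> simp only [lo, J]
  · rw [if_pos (by omega)]; simp
  · rw [if_pos (by omega), if_pos (by omega)]; simp

lemma up_J_full (a b : ℕ) (c : ℝ) (F : ℕ → ℕ → ℝ) (i j k l : ℕ) (h : i + j = k + l + 2)
    (hk : k + 2 ≤ i) (hi : i < a) :
    up a b 0 (fun s1 s2 => J i j s1 s2 * F s1 s2) k l = up a b c F k l := by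
  simp only [up, J]
  have e1 : i + j = k + 1 + l + 1 ∧ k + 1 < i := by omega
  have e2 : i + j = k + (l + 1) + 1 ∧ k < i := by omega
  have e3 : k + 1 < a := by omega
  rw [if_pos e1, if_pos e2]; simp [e3]

lemma conv_entry (a b : ℕ) (Q : ℝ) (hQ : 0 < Q) (F : ℕ → ℕ → ℝ) (hF : ∀ i j, 0 < F i j) 
    (u v : Fin a × Fin b) :
    Aw a b F u * lo 0 (fun s1 s2 => F s1 s2 * J s1 s2 v.1 v.2) u.1 u.2 * (F v.1 v.2)⁻¹ =
    F u.1 u.2 * up a b 0 (fun s1 s2 => J u.1 u.2 s1 s2 * (F s1 s2)⁻¹) v.1 v.2 * Vw a b Q F v := by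
  obtain ⟨⟨i, hi⟩, ⟨j, hj⟩⟩ := u
  obtain ⟨⟨k, hk⟩, ⟨l, hl⟩⟩ := v
  simp only [Aw, Vw]
  have hlo := lo_pos one_pos hF i j
  have hup := up_pos (a := a) (b := b) (inv_pos.2 hQ) (fun i j => inv_pos.2 (hF i j)) k l
  have h1 := hF i j
  have h2 := hF k l
  by_cases hr : i + j = k + l + 2 ∧ k < i
  · obtain ⟨hr, hki⟩ := hr
    by_cases hk2 : k + 2 ≤ i
    · rw [lo_J_full F i j k l hr hk2, up_J_full a b Q⁻¹ _ i j k l hr hk2 hi]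
      generalize up a b Q⁻¹ (fun i j => (F i j)⁻¹) k l = U at hup ⊢
      field_simp
    · obtain rfl : i = k + 1 := by omega
      obtain rfl : j = l + 1 := by omega
      simp only [lo, up, J]
      rw [if_pos hi, if_pos hj, if_pos hi, if_pos hj]
      have h3 := hF (k+1) l
      have h4 := hF k (l+1)
      rw [if_neg (by omega), if_pos (by omega), if_neg (by omega), if_pos (by omega)]
      field_simp
  · have e1 : lo 0 (fun s1 s2 => F s1 s2 * J s1 s2 k l) i j = 0 := by
      rcases i with _ | i <;> rcases j with _ | j <;> simp only [lo, J]
      · rw [if_neg (by omega)]; simp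
      · rw [if_neg (by omega)]; simp
      · rw [if_neg (by omega), if_neg (by omega)]; simp
    have e2 : up a b 0 (fun s1 s2 => J i j s1 s2 * (F s1 s2)⁻¹) k l = 0 := by
      simp only [up, J]
      have e1 : ¬ (i + j = k + 1 + l + 1 ∧ k + 1 < i) := by omega
      have e2 : ¬ (i + j = k + (l + 1) + 1 ∧ k < i) := by omega
      simp [e1, e2]
    rw [e1, e2]; simp

lemma conv_mat (a b : ℕ) (Q : ℝ) (hQ : 0 < Q) (F : ℕ → ℕ → ℝ) (hF : ∀ i j, 0 < F i j) :
    Matrix.diagonal (Aw a b F) * D a b * W a b F =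
      W a b F * (D a b * Matrix.diagonal (Vw a b Q F)) := by
  ext u v
  have h := conv_entry a b Q hQ F hF u v
  rw [← sum_D_left a b u, ← sum_D_right a b v] at h
  rw [Matrix.mul_assoc, Matrix.diagonal_mul, ← Matrix.mul_assoc, Matrix.mul_diagonal,
    Matrix.mul_apply, Matrix.mul_apply]
  calc _ = _ := by
        rw [mul_assoc, Finset.sum_mul]
        congr 1
        apply Finset.sum_congr rfl
        intro s _
        simp only [W]; ring
    _ = _ := h
    _ = _ := by
        congr 1
        rw [Finset.mul_sum]
        apply Finset.sum_congr rfl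
        intro s _
        simp only [W]; ring

lemma conversion (a b : ℕ) (Q : ℝ) (hQ : 0 < Q) (F : ℕ → ℕ → ℝ) (hF : ∀ i j, 0 < F i j)
    (k i : ℕ) (hk : k + 1 < a) (hi : i + 1 < a) (hb : 0 < b) (hb1 : b - 1 < b) :
    PM a b (Aw a b F) (⟨k+1, hk⟩, ⟨b-1, hb1⟩) (⟨i+1, hi⟩, ⟨0, hb⟩) =
    PM a b (Vw a b Q F) (⟨k, by omega⟩, ⟨b-1, hb1⟩) (⟨i, by omega⟩, ⟨0, hb⟩) := by
  have h1 : W a b F * (1 - D a b * Matrix.diagonal (Vw a b Q F)) =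
      (1 - Matrix.diagonal (Aw a b F) * D a b) * W a b F := by
    rw [Matrix.mul_sub, Matrix.sub_mul, conv_mat a b Q hQ F hF, Matrix.mul_one, Matrix.one_mul]
  have h2 : (1 - Matrix.diagonal (Aw a b F) * D a b)⁻¹ * W a b F =
      W a b F * (1 - D a b * Matrix.diagonal (Vw a b Q F))⁻¹ := by
    calc _ = (1 - Matrix.diagonal (Aw a b F) * D a b)⁻¹ *
        (W a b F * (1 - D a b * Matrix.diagonal (Vw a b Q F))) *
          (1 - D a b * Matrix.diagonal (Vw a b Q F))⁻¹ := by
          rw [Matrix.mul_assoc, Matrix.mul_assoc, Matrix.mul_nonsing_inv _ (isUnit_r _ _ _),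
            Matrix.mul_one]
      _ = _ := by
          rw [h1, ← Matrix.mul_assoc, Matrix.nonsing_inv_mul _ (isUnit_l _ _ _), Matrix.one_mul]
  have h3 := congrFun (congrFun h2 (⟨k+1, hk⟩, ⟨b-1, hb1⟩)) (⟨i, by omega⟩, ⟨0, hb⟩)
  rw [Matrix.mul_apply, Matrix.mul_apply] at h3
  rw [Finset.sum_eq_single (⟨i+1, hi⟩, ⟨0, hb⟩), 
    Finset.sum_eq_single (⟨k, by omega⟩, ⟨b-1, hb1⟩)] at h3
  · rw [PM_eq a b (Vw a b Q F)]
    unfold PM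
    rw [Matrix.mul_diagonal, Matrix.diagonal_mul]
    convert h3 using 2
    · simp [Aw, W, lo, J, div_eq_mul_inv]
    · simp only [Vw, W, up, J]
      rw [if_pos hk, if_neg (by omega), if_pos (by omega)]
      simp
  · rintro ⟨⟨s1, hs1⟩, ⟨s2, hs2⟩⟩ _ hne
    have : ¬ (k + 1 + (b - 1) = s1 + s2 + 1 ∧ s1 < k + 1) := by
      rintro ⟨h, h'⟩
      apply hne
      ext <;> simp <;> omega
    simp only [W, J]
    rw [if_neg this]; simp
  · simp
  · rintro ⟨⟨s1, hs1⟩, ⟨s2, hs2⟩⟩ _ hne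
    have : ¬ (s1 + s2 = i + 0 + 1 ∧ i < s1) := by
      rintro ⟨h, h'⟩
      apply hne
      ext <;> simp <;> omega
    simp only [W, J]
    rw [if_neg this]; simp
  · simp

section recip
variable (a b : ℕ) (Q : ℝ) (F : ℕ → ℕ → ℕ → ℝ)

def Rec : Prop := ∀ t i j, i < a → j < b →
  F (t+1) i j * F t i j * up a b Q⁻¹ (fun i j => (F t i j)⁻¹) i j = lo 1 (F (t+1)) i j

lemma AV (hQ : 0 < Q) (hF : ∀ t i j, 0 < F t i j) (h : Rec a b Q F) (t : ℕ) :
    Aw a b (F (t+1)) = Vw a b Q (F t) := by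
  ext u
  have h1 := h t u.1 u.2 u.1.2 u.2.2
  have h2 := up_pos (a := a) (b := b) (inv_pos.2 hQ) (fun i j => inv_pos.2 (hF t i j)) u.1 u.2
  have h3 := hF t u.1 u.2
  have h4 := hF (t+1) u.1 u.2
  unfold Aw Vw
  rw [← h1]
  field_simp

lemma edge_aux (hQ : 0 < Q) (hF : ∀ t i j, 0 < F t i j) (h : Rec a b Q F)
    (hb : 0 < b) (hb1 : b - 1 < b) (i : ℕ) : ∀ (t k : ℕ) (hk : k + i < a) (hi : i < a),
    PM a b (Aw a b (F t)) (⟨k + i, hk⟩, ⟨b-1, hb1⟩) (⟨i, hi⟩, ⟨0, hb⟩) = F (t+i) k (b-1) := by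
  induction i with
  | zero =>
    intro t k hk hi
    rw [PA_bot a b (F t) (hF t)]; simp
  | succ i ih =>
    intro t k hk hi
    have := conversion a b Q hQ (F t) (hF t) (k+i) i (by omega) hi hb hb1
    rw [← AV a b Q F hQ hF h t, ih (t+1) k] at this
    rw [show t + (i+1) = t + 1 + i by ring, ← this]
    congr 1

lemma edge (hQ : 0 < Q) (hF : ∀ t i j, 0 < F t i j) (h : Rec a b Q F)
    (hb : 0 < b) (t i : ℕ) (hi : i < a) :
    F (t + i + 1) (a - 1 - i) (b - 1) = Q / F t i 0 := by
  have h1 := PV_top a b Q hQ (F t) (hF t) (⟨i, hi⟩, ⟨0, hb⟩) (by omega) (by omega)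
  rw [← AV a b Q F hQ hF h t] at h1
  have h2 := edge_aux a b Q F hQ hF h hb (by omega) i (t+1) (a-1-i) (by omega) hi
  simp only at h1
  rw [show t + i + 1 = t + 1 + i by ring, ← h2, ← h1]
  congr 3
  omega

lemma recip (hQ : 0 < Q) (hF : ∀ t i j, 0 < F t i j) (h : Rec a b Q F) (j : ℕ) :
    ∀ (t i : ℕ), i < a → j < b →
    F (t + i + j + 1) (a - 1 - i) (b - 1 - j) = Q / F t i j := by
  induction j using Nat.strong_induction_on with
  | _ j ih =>
  intro t i hi hj
  rcases j with _ | j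
  · exact edge a b Q F hQ hF h hj t i hi
  -- use the recursion at (i, j)
  have e1 := h t i j hi (by omega)
  have e2 := h (t + i + j + 1) (a - 1 - i) (b - 1 - j) (by omega) (by omega)
  have r1 := ih j (by omega) t i hi (by omega)
  have r2 := ih j (by omega) (t+1) i hi (by omega)
  rw [show t + 1 + i + j + 1 = t + i + j + 1 + 1 by ring] at r2
  rw [r1, r2] at e2
  have p1 := hF t i j
  have p2 := hF (t+1) i j
  -- lower sum at dual
  have hU : up a b Q⁻¹ (fun i' j' => (F (t + i + j + 1) i' j')⁻¹) (a - 1 - i) (b - 1 - j) =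
      Q⁻¹ * lo 1 (F (t+1)) i j := by
    rcases i with _ | i <;> rcases j with _ | j
    · simp only [up, lo]
      rw [if_neg (by omega), if_neg (by omega)]; simp
    · have r := ih j (by omega) (t+1) 0 hi (by omega)
      simp only [up, lo]
      rw [if_neg (by omega), if_pos (by omega), show b - 1 - (j+1) + 1 = b - 1 - j by omega,
        show t + 0 + (j+1) + 1 = t + 1 + 0 + j + 1 by ring, r]
      rw [inv_div, div_eq_inv_mul]
    · have r := ih 0 (by omega) (t+1) i (by omega) (by omega)
      simp only [up, lo]
      rw [if_pos (by omega), if_neg (by omega), show a - 1 - (i+1) + 1 = a - 1 - i by omega,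
        show t + (i + 1) + 0 + 1 = t + 1 + i + 0 + 1 by ring, r]
      rw [inv_div, div_eq_inv_mul]
    · have r := ih (j+1) (by omega) (t+1) i (by omega) (by omega)
      have r' := ih j (by omega) (t+1) (i+1) (by omega) (by omega)
      simp only [up, lo]
      rw [if_pos (by omega), if_pos (by omega), show a - 1 - (i+1) + 1 = a - 1 - i by omega,
        show b - 1 - (j+1) + 1 = b - 1 - j by omega]
      rw [show t + (i + 1) + (j+1) + 1 = t + 1 + i + (j + 1) + 1 by ring, r,
        show t + 1 + i + (j+1) + 1 = t + 1 + (i+1) + j + 1 by ring, r']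
      rw [inv_div, inv_div]; ring
  rw [hU, ← e1] at e2
  have e3 : lo 1 (F (t + i + j + 1 + 1)) (a - 1 - i) (b - 1 - j) =
      Q * up a b Q⁻¹ (fun i j => (F t i j)⁻¹) i j := by
    rw [← e2]; field_simp
  -- expand
  have hj' : b - 1 - j = (b - 1 - (j+1)) + 1 := by omega
  have p4 := hF t i (j+1)
  by_cases hia : i + 1 < a
  · have r := ih j (by omega) t (i+1) hia (by omega)
    have hi' : a - 1 - i = (a - 1 - (i+1)) + 1 := by omega
    rw [hi', hj'] at e3
    simp only [lo, up] at e3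
    rw [← hj', ← hi', if_pos hia, if_pos hj, 
      show t + i + j + 1 + 1 = t + (i+1) + j + 1 by ring, r] at e3
    rw [show t + i + (j+1) + 1 = t + (i+1) + j + 1 by ring]
    rw [div_eq_mul_inv] at *
    linarith
  · have hi' : a - 1 - i = 0 := by omega
    rw [hi', hj'] at e3
    simp only [lo, up] at e3
    rw [if_neg hia, if_pos hj] at e3
    rw [hi', show t + i + (j+1) + 1 = t + i + j + 1 + 1 by ring, e3, div_eq_mul_inv]

end recip
end RBiro

namespace RBiro
/-- tropical lower max -/
def tlo (h : ℕ → ℕ → ℤ) : ℕ → ℕ → ℤ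
  | 0, 0 => 0
  | i+1, 0 => h i 0
  | 0, j+1 => h 0 j
  | i+1, j+1 => max (h i (j+1)) (h (i+1) j)

/-- tropical upper min -/
def tup (a b : ℕ) (c : ℤ) (h : ℕ → ℕ → ℤ) (i j : ℕ) : ℤ :=
  if i + 1 < a then (if j + 1 < b then min (h (i+1) j) (h i (j+1)) else h (i+1) j)
  else (if j + 1 < b then h i (j+1) else c)

/-- tropical rowmotion -/
def trow (a b : ℕ) (c : ℤ) (h : ℕ → ℕ → ℤ) : ℕ → ℕ → ℤ
  | 0, 0 => 0 + tup a b c h 0 0 - h 0 0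
  | i+1, 0 => trow a b c h i 0 + tup a b c h (i+1) 0 - h (i+1) 0
  | 0, j+1 => trow a b c h 0 j + tup a b c h 0 (j+1) - h 0 (j+1)
  | i+1, j+1 => max (trow a b c h i (j+1)) (trow a b c h (i+1) j)
      + tup a b c h (i+1) (j+1) - h (i+1) (j+1)
termination_by i j => i + j

lemma trow_eq (a b : ℕ) (c : ℤ) (h : ℕ → ℕ → ℤ) (i j : ℕ) :
    trow a b c h i j = tlo (trow a b c h) i j + tup a b c h i j - h i j := by
  rcases i with _ | i <;> rcases j with _ | j <;> rw [trow] <;> simp only [tlo]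

/-- birational rowmotion -/
noncomputable def brow (a b : ℕ) (Q : ℝ) (F : ℕ → ℕ → ℝ) : ℕ → ℕ → ℝ
  | 0, 0 => 1 / (F 0 0 * up a b Q⁻¹ (fun i j => (F i j)⁻¹) 0 0)
  | i+1, 0 => brow a b Q F i 0 / (F (i+1) 0 * up a b Q⁻¹ (fun i j => (F i j)⁻¹) (i+1) 0)
  | 0, j+1 => brow a b Q F 0 j / (F 0 (j+1) * up a b Q⁻¹ (fun i j => (F i j)⁻¹) 0 (j+1))
  | i+1, j+1 => (brow a b Q F i (j+1) + brow a b Q F (i+1) j) /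
      (F (i+1) (j+1) * up a b Q⁻¹ (fun i j => (F i j)⁻¹) (i+1) (j+1))
termination_by i j => i + j

lemma brow_eq (a b : ℕ) (Q : ℝ) (F : ℕ → ℕ → ℝ) (i j : ℕ) :
    brow a b Q F i j = lo 1 (brow a b Q F) i j /
      (F i j * up a b Q⁻¹ (fun i j => (F i j)⁻¹) i j) := by
  rcases i with _ | i <;> rcases j with _ | j <;> rw [brow] <;> simp only [lo]

/-- `F(x)` grows like `x^n`. -/
def Tr (F : ℝ → ℝ) (n : ℤ) : Prop :=
  ∃ C : ℝ, 0 < C ∧ ∀ x : ℝ, 1 ≤ x → x ^ n ≤ C * F x ∧ F x ≤ C * x ^ n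

lemma Tr.pos {F : ℝ → ℝ} {n : ℤ} (h : Tr F n) (x : ℝ) (hx : 1 ≤ x) : 0 < F x := by
  obtain ⟨C, hC, h⟩ := h
  have h1 := (h x hx).1
  have : 0 < x ^ n := zpow_pos (by linarith) n
  exact pos_of_mul_pos_right (lt_of_lt_of_le this h1) hC.le

lemma Tr.zpow (n : ℤ) : Tr (fun x => x ^ n) n := ⟨1, one_pos, fun x _ => by simp⟩

lemma Tr.one : Tr (fun _ => 1) 0 := ⟨1, one_pos, fun x _ => by simp⟩

lemma Tr.mul {F G : ℝ → ℝ} {n m : ℤ} (hF : Tr F n) (hG : Tr G m) :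
    Tr (fun x => F x * G x) (n + m) := by
  have pF := hF.pos
  have pG := hG.pos
  obtain ⟨C, hC, h⟩ := hF
  obtain ⟨C', hC', h'⟩ := hG
  refine ⟨C * C', by positivity, fun x hx => ?_⟩
  have hx0 : 0 < x := by linarith
  have q1 : 0 < x ^ n := zpow_pos hx0 n
  have q2 : 0 < x ^ m := zpow_pos hx0 m
  have := pF x hx
  have := pG x hx
  rw [zpow_add₀ hx0.ne']
  constructor
  · calc x ^ n * x ^ m ≤ (C * F x) * (C' * G x) :=
        mul_le_mul (h x hx).1 (h' x hx).1 q2.le (by positivity)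
      _ = _ := by ring
  · calc F x * G x ≤ (C * x ^ n) * (C' * x ^ m) :=
        mul_le_mul (h x hx).2 (h' x hx).2 (by positivity) (by positivity)
      _ = _ := by ring

lemma Tr.inv {F : ℝ → ℝ} {n : ℤ} (hF : Tr F n) : Tr (fun x => (F x)⁻¹) (-n) := by
  have pF := hF.pos
  obtain ⟨C, hC, h⟩ := hF
  refine ⟨C, hC, fun x hx => ?_⟩
  have hx0 : 0 < x := by linarith
  have q1 : 0 < x ^ n := zpow_pos hx0 n
  have := pF x hx
  obtain ⟨h1, h2⟩ := h x hx
  rw [zpow_neg]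
  constructor
  · field_simp
    linarith
  · field_simp
    linarith

lemma Tr.add {F G : ℝ → ℝ} {n m : ℤ} (hF : Tr F n) (hG : Tr G m) :
    Tr (fun x => F x + G x) (max n m) := by
  have pF := hF.pos
  have pG := hG.pos
  obtain ⟨C, hC, h⟩ := hF
  obtain ⟨C', hC', h'⟩ := hG
  refine ⟨C + C', by positivity, fun x hx => ?_⟩
  have pf := pF x hx
  have pg := pG x hx
  obtain ⟨h1, h2⟩ := h x hx
  obtain ⟨h3, h4⟩ := h' x hx
  have m1 : x ^ n ≤ x ^ (max n m) := zpow_le_zpow_right₀ hx (le_max_left _ _)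
  have m2 : x ^ m ≤ x ^ (max n m) := zpow_le_zpow_right₀ hx (le_max_right _ _)
  constructor
  · have a1 := mul_pos hC pf
    have a2 := mul_pos hC pg
    have a3 := mul_pos hC' pf
    have a4 := mul_pos hC' pg
    rcases max_choice n m with e | e <;> rw [e] <;> nlinarith
  · have := mul_le_mul_of_nonneg_left m1 hC.le
    have := mul_le_mul_of_nonneg_left m2 hC'.le
    linarith

lemma Tr.unique {F : ℝ → ℝ} {n m : ℤ} (h : Tr F n) (h' : Tr F m) : n ≤ m := by
  by_contra hlt
  push Not at hlt
  have pF := h.pos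
  obtain ⟨C, hC, h⟩ := h
  obtain ⟨C', hC', h'⟩ := h'
  set x : ℝ := C * C' + 1 with hxd
  have hx : 1 ≤ x := by have := mul_pos hC hC'; linarith
  have hx0 : 0 < x := by linarith
  have q : 0 < x ^ m := zpow_pos hx0 m
  have h1 := (h x hx).1
  have h2 := (h' x hx).2
  have h3 : x ^ (m + 1) ≤ x ^ n := zpow_le_zpow_right₀ hx (by omega)
  rw [zpow_add_one₀ hx0.ne'] at h3
  have h4 : C * F x ≤ C * (C' * x ^ m) := mul_le_mul_of_nonneg_left h2 hC.le
  have : x ^ m * x ≤ x ^ m * (C * C') := by linarith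
  have := le_of_mul_le_mul_left this q
  linarith

lemma Tr.congr {F G : ℝ → ℝ} {n m : ℤ} (h : Tr F n) (hFG : ∀ x, F x = G x) (e : n = m) :
    Tr G m := by
  obtain rfl : F = G := funext hFG
  exact e ▸ h

lemma Tr_up (a b : ℕ) (c : ℤ) (F : ℝ → ℕ → ℕ → ℝ) (h : ℕ → ℕ → ℤ)
    (hF : ∀ i j, Tr (fun x => F x i j) (h i j)) (i j : ℕ) :
    Tr (fun x => up a b (x ^ c)⁻¹ (fun i j => (F x i j)⁻¹) i j) (- tup a b c h i j) := by
  unfold up tup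
  split_ifs
  · refine ((hF (i+1) j).inv.add (hF i (j+1)).inv).congr (fun x => rfl) ?_
    omega
  · exact (hF (i+1) j).inv
  · exact (hF i (j+1)).inv
  · exact (Tr.zpow c).inv

lemma Tr_row (a b : ℕ) (c : ℤ) (F : ℝ → ℕ → ℕ → ℝ) (h : ℕ → ℕ → ℤ)
    (hF : ∀ i j, Tr (fun x => F x i j) (h i j)) (n : ℕ) : ∀ i j, i + j = n →
    Tr (fun x => brow a b (x ^ c) (F x) i j) (trow a b c h i j) := by
  induction n using Nat.strong_induction_on with
  | _ n ih =>
  intro i j hn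
  have hU := Tr_up a b c F h hF i j
  have key : Tr (fun x => lo 1 (brow a b (x ^ c) (F x)) i j) (tlo (trow a b c h) i j) := by
    rcases i with _ | i <;> rcases j with _ | j <;> simp only [lo, tlo]
    · exact Tr.one
    · exact ih _ (by omega) _ _ rfl
    · exact ih _ (by omega) _ _ rfl
    · exact (ih _ (by omega) _ _ rfl).add (ih _ (by omega) _ _ rfl)
  refine (key.mul ((hF i j).mul hU).inv).congr (fun x => ?_) ?_
  · rw [brow_eq, div_eq_mul_inv]
  · rw [trow_eq]; ring

theorem trop_recip (a b : ℕ) (c : ℤ) (h : ℕ → ℕ → ℤ) (i j : ℕ) (hi : i < a) (hj : j < b) :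
    (trow a b c)^[i + j + 1] h (a - 1 - i) (b - 1 - j) = c - h i j := by
  set F : ℝ → ℕ → ℕ → ℕ → ℝ := fun x t => (brow a b (x ^ c))^[t] (fun i j => x ^ h i j) with hFd
  have hTr : ∀ t i j, Tr (fun x => F x t i j) ((trow a b c)^[t] h i j) := by
    intro t
    induction t with
    | zero => intro i j; exact Tr.zpow _
    | succ t ih =>
      intro i j
      have := Tr_row a b c (fun x => F x t) _ ih _ i j rfl
      simpa only [hFd, Function.iterate_succ_apply'] using this
  have hrec : ∀ x : ℝ, 1 ≤ x →
      F x (i + j + 1) (a - 1 - i) (b - 1 - j) = x ^ c * (F x 0 i j)⁻¹ := by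
    intro x hx
    have hQ : 0 < x ^ c := zpow_pos (by linarith) c
    have hpos : ∀ t i j, 0 < F x t i j := fun t i j => (hTr t i j).pos x hx
    have := recip a b (x ^ c) (F x) hQ hpos ?_ j 0 i hi hj
    · rw [← div_eq_mul_inv, ← this]; simp
    · intro t i j _ _
      have e : F x (t+1) = brow a b (x ^ c) (F x t) := by
        simp only [hFd, Function.iterate_succ_apply']
      rw [e]
      have h1 := hpos t i j
      have h2 := up_pos (a := a) (b := b) (inv_pos.2 hQ) (fun i j => inv_pos.2 (hpos t i j)) i j
      conv_lhs => rw [brow_eq]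
      generalize up a b (x ^ c)⁻¹ (fun i j => (F x t i j)⁻¹) i j = U at h2 ⊢
      field_simp
  have h1 := hTr (i + j + 1) (a - 1 - i) (b - 1 - j)
  have h2 := (Tr.zpow c).mul (hTr 0 i j).inv
  have h3 : Tr (fun x => F x (i + j + 1) (a - 1 - i) (b - 1 - j)) (c + -((trow a b c)^[0] h i j)) := by
    obtain ⟨C, hC, h⟩ := h2
    exact ⟨C, hC, fun x hx => by
      have := h x hx
      simp only [← hrec x hx] at this
      exact this⟩
  have := h1.unique h3
  have := h3.unique h1
  simp only [Function.iterate_zero, id] at *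
  omega

end RBiro

namespace RBiro

def Good (a b ℓ : ℕ) (h : ℕ → ℕ → ℤ) : Prop := ∀ i j, i < a → j < b →
  0 ≤ h i j ∧ h i j ≤ ℓ ∧ (i + 1 < a → h i j ≤ h (i+1) j) ∧ (j + 1 < b → h i j ≤ h i (j+1))

lemma Good.tlo_le {a b ℓ : ℕ} {h : ℕ → ℕ → ℤ} (H : Good a b ℓ h) {i j : ℕ} (hi : i < a)
    (hj : j < b) : tlo h i j ≤ h i j := by
  rcases i with _ | i <;> rcases j with _ | j <;> simp only [tlo]
  · exact (H _ _ hi hj).1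
  · exact (H 0 j hi (by omega)).2.2.2 hj
  · exact (H i 0 (by omega) (by omega)).2.2.1 hi
  · exact max_le ((H i (j+1) (by omega) (by omega)).2.2.1 hi)
      ((H (i+1) j (by omega) (by omega)).2.2.2 hj)

lemma Good.tlo_nonneg {a b ℓ : ℕ} {h : ℕ → ℕ → ℤ} (H : Good a b ℓ h) {i j : ℕ} (hi : i < a)
    (hj : j < b) : 0 ≤ tlo h i j := by
  rcases i with _ | i <;> rcases j with _ | j <;> simp only [tlo]
  · exact le_rfl
  · exact (H 0 j hi (by omega)).1
  · exact (H i 0 (by omega) (by omega)).1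
  · exact le_max_of_le_left (H i (j+1) (by omega) (by omega)).1

lemma Good.le_tup {a b ℓ : ℕ} {h : ℕ → ℕ → ℤ} (H : Good a b ℓ h) {i j : ℕ} (hi : i < a)
    (hj : j < b) : h i j ≤ tup a b ℓ h i j := by
  obtain ⟨h1, h2, h3, h4⟩ := H i j hi hj
  unfold tup
  split_ifs with c1 c2 c3
  · exact le_min (h3 c1) (h4 c2)
  · exact h3 c1
  · exact h4 c3
  · exact h2

lemma Good.tup_le {a b ℓ : ℕ} {h : ℕ → ℕ → ℤ} (H : Good a b ℓ h) {i j : ℕ} (hi : i < a)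
    (hj : j < b) : tup a b ℓ h i j ≤ ℓ := by
  unfold tup
  split_ifs with c1 c2 c3
  · exact min_le_of_left_le (H _ _ c1 hj).2.1
  · exact (H _ _ c1 hj).2.1
  · exact (H _ _ hi c3).2.1
  · exact le_rfl

lemma tup_le1 {a b : ℕ} {c : ℤ} {h : ℕ → ℕ → ℤ} {i j : ℕ} (hi : i + 1 < a) :
    tup a b c h i j ≤ h (i+1) j := by
  unfold tup; rw [if_pos hi]; split_ifs <;> simp

lemma tup_le2 {a b : ℕ} {c : ℤ} {h : ℕ → ℕ → ℤ} {i j : ℕ} (hj : j + 1 < b) :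
    tup a b c h i j ≤ h i (j+1) := by
  unfold tup; rw [if_pos hj]; split_ifs <;> simp

lemma le_tlo1 {h : ℕ → ℕ → ℤ} {i j : ℕ} : h i j ≤ tlo h (i+1) j := by
  rcases j with _ | j <;> simp [tlo]

lemma le_tlo2 {h : ℕ → ℕ → ℤ} {i j : ℕ} : h i j ≤ tlo h i (j+1) := by
  rcases i with _ | i <;> simp [tlo]

lemma Good.modify {a b ℓ : ℕ} {h h' : ℕ → ℕ → ℤ} (H : Good a b ℓ h) (S : ℕ → ℕ → Prop)
    (S1 : ∀ i j, S i j → ¬ S (i+1) j) (S2 : ∀ i j, S i j → ¬ S i (j+1))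
    (h1 : ∀ i j, ¬ S i j → h' i j = h i j)
    (h2 : ∀ i j, i < a → j < b → S i j → tlo h i j ≤ h' i j ∧ h' i j ≤ tup a b ℓ h i j) :
    Good a b ℓ h' := by
  intro i j hi hj
  by_cases hS : S i j
  · obtain ⟨l, u⟩ := h2 i j hi hj hS
    refine ⟨(H.tlo_nonneg hi hj).trans l, u.trans (H.tup_le hi hj), fun c => ?_, fun c => ?_⟩
    · rw [h1 _ _ (S1 _ _ hS)]; exact u.trans (tup_le1 c)
    · rw [h1 _ _ (S2 _ _ hS)]; exact u.trans (tup_le2 c)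
  · rw [h1 _ _ hS]
    obtain ⟨g1, g2, g3, g4⟩ := H i j hi hj
    refine ⟨g1, g2, fun c => ?_, fun c => ?_⟩
    · by_cases hS' : S (i+1) j
      · exact le_tlo1.trans (h2 _ _ c hj hS').1
      · rw [h1 _ _ hS']; exact g3 c
    · by_cases hS' : S i (j+1)
      · exact le_tlo2.trans (h2 _ _ hi c hS').1
      · rw [h1 _ _ hS']; exact g4 c

lemma Good.mono {a b ℓ : ℕ} {h : ℕ → ℕ → ℤ} (H : Good a b ℓ h) {i j i' j' : ℕ} (hi : i ≤ i')
    (hj : j ≤ j') (hi' : i' < a) (hj' : j' < b) : h i j ≤ h i' j' := by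
  have e1 : ∀ k, i ≤ k → k < a → h i j ≤ h k j := by
    intro k hk
    induction k, hk using Nat.le_induction with
    | base => intro _; exact le_rfl
    | succ k hk ih => 
      intro hk'
      exact (ih (by omega)).trans ((H k j (by omega) (by omega)).2.2.1 hk')
  have e2 : ∀ k, j ≤ k → k < b → h i' j ≤ h i' k := by
    intro k hk
    induction k, hk using Nat.le_induction with
    | base => intro _; exact le_rfl
    | succ k hk ih => 
      intro hk'
      exact (ih (by omega)).trans ((H i' k (by omega) (by omega)).2.2.2 hk')
  exact (e1 i' hi hi').trans (e2 j' hj hj')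

/-- labeling associated with a height function -/
def toLab (a b ℓ : ℕ) (h : ℕ → ℕ → ℤ) : (Fin a × Fin b) × Fin ℓ → ℤ := fun p =>
  (p.1.1.val : ℤ) + p.1.2.val + 1 + if (ℓ : ℤ) ≤ p.2.val + h p.1.1 p.1.2 then 1 else 0

lemma toLab_strict {a b ℓ : ℕ} {h : ℕ → ℕ → ℤ} (H : Good a b ℓ h) :
    IsPStrict (Fin a × Fin b) ℓ (a + b) (toLab a b ℓ h) := by
  refine ⟨?_, ?_, ?_⟩
  · rintro ⟨⟨i, hi⟩, ⟨j, hj⟩⟩ ⟨⟨i', hi'⟩, ⟨j', hj'⟩⟩ z hlt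
    have hle := hlt.le
    have hne := hlt.ne
    simp only [Prod.mk_le_mk, Fin.mk_le_mk, ne_eq, Prod.mk.injEq, Fin.mk.injEq] at hle hne
    have := H.mono hle.1 hle.2 hi' hj'
    simp only [toLab]
    split_ifs <;> omega
  · rintro ⟨⟨i, hi⟩, ⟨j, hj⟩⟩ ⟨z, hz⟩ ⟨z', hz'⟩ hle
    simp only [Fin.mk_le_mk] at hle
    simp only [toLab]
    split_ifs <;> omega
  · rintro ⟨⟨i, hi⟩, ⟨j, hj⟩⟩ ⟨z, hz⟩
    simp only [toLab]
    push_cast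
    split_ifs <;> omega

lemma strict_ge {a b ℓ : ℕ} {g : (Fin a × Fin b) × Fin ℓ → ℤ}
    (H : IsPStrict (Fin a × Fin b) ℓ (a + b) g) (z : Fin ℓ) (n : ℕ) :
    ∀ i j (hi : i < a) (hj : j < b), i + j = n → 
    (i : ℤ) + j + 1 ≤ g ((⟨i, hi⟩, ⟨j, hj⟩), z) := by
  induction n with
  | zero =>
    intro i j hi hj hn
    have := (H.2.2 (⟨i, hi⟩, ⟨j, hj⟩) z).1
    omega
  | succ n ih =>
    intro i j hi hj hn
    rcases i with _ | i
    · obtain ⟨j, rfl⟩ : ∃ k, j = k + 1 := ⟨j - 1, by omega⟩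
      have h1 := ih 0 j hi (by omega) (by omega)
      have h2 := H.1 (⟨0, hi⟩, ⟨j, by omega⟩) (⟨0, hi⟩, ⟨j+1, hj⟩) z (by simp)
      push_cast at *; omega
    · have h1 := ih i j (by omega) hj (by omega)
      have h2 := H.1 (⟨i, by omega⟩, ⟨j, hj⟩) (⟨i+1, hi⟩, ⟨j, hj⟩) z (by simp)
      push_cast at *; omega

lemma strict_le {a b ℓ : ℕ} {g : (Fin a × Fin b) × Fin ℓ → ℤ}
    (H : IsPStrict (Fin a × Fin b) ℓ (a + b) g) (z : Fin ℓ) (n : ℕ) :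
    ∀ i j (hi : i < a) (hj : j < b), i + j + n + 2 = a + b → 
    g ((⟨i, hi⟩, ⟨j, hj⟩), z) ≤ (i : ℤ) + j + 2 := by
  induction n with
  | zero =>
    intro i j hi hj hn
    have := (H.2.2 (⟨i, hi⟩, ⟨j, hj⟩) z).2
    push_cast at this; omega
  | succ n ih =>
    intro i j hi hj hn
    by_cases hj' : j + 1 < b
    · have h1 := ih i (j+1) hi (by omega) (by omega)
      have h2 := H.1 (⟨i, hi⟩, ⟨j, hj⟩) (⟨i, hi⟩, ⟨j+1, hj'⟩) z (by simp)
      push_cast at *; omega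
    · have h1 := ih (i+1) j (by omega) hj (by omega)
      have h2 := H.1 (⟨i, by omega⟩, ⟨j, hj⟩) (⟨i+1, by omega⟩, ⟨j, hj⟩) z (by simp)
      push_cast at *; omega

lemma strict_bd {a b ℓ : ℕ} {g : (Fin a × Fin b) × Fin ℓ → ℤ}
    (H : IsPStrict (Fin a × Fin b) ℓ (a + b) g) (z : Fin ℓ) (i j : ℕ) (hi : i < a) (hj : j < b) :
    (i : ℤ) + j + 1 ≤ g ((⟨i, hi⟩, ⟨j, hj⟩), z) ∧ g ((⟨i, hi⟩, ⟨j, hj⟩), z) ≤ (i : ℤ) + j + 2 :=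
  ⟨strict_ge H z _ i j hi hj rfl, strict_le H z (a + b - (i + j + 2)) i j hi hj (by omega)⟩

lemma up_card {ℓ : ℕ} (S : Finset (Fin ℓ)) (hS : ∀ z z', z ≤ z' → z ∈ S → z' ∈ S) (z : Fin ℓ) :
    z ∈ S ↔ (ℓ : ℤ) ≤ z.val + (S.card : ℤ) := by
  constructor
  · intro hz
    have : Finset.Ici z ⊆ S := fun z' hz' => hS z z' (Finset.mem_Ici.1 hz') hz
    have := Finset.card_le_card this
    rw [Fin.card_Ici] at this
    omega
  · intro h
    by_contra hz
    have : S ⊆ Finset.Ioi z := fun z' hz' => by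
      rw [Finset.mem_Ioi]
      by_contra hh
      exact hz (hS z' z (not_lt.1 hh) hz')
    have := Finset.card_le_card this
    rw [Fin.card_Ioi] at this
    omega

lemma exists_height {a b ℓ : ℕ} {f : (Fin a × Fin b) × Fin ℓ → ℤ}
    (H : IsPStrict (Fin a × Fin b) ℓ (a + b) f) : ∃ h, Good a b ℓ h ∧ f = toLab a b ℓ h := by
  set S : ∀ i j, i < a → j < b → Finset (Fin ℓ) := fun i j hi hj =>
    Finset.univ.filter (fun z => f ((⟨i, hi⟩, ⟨j, hj⟩), z) = (i : ℤ) + j + 2) with hS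
  have memS : ∀ i j hi hj z, z ∈ S i j hi hj ↔ f ((⟨i, hi⟩, ⟨j, hj⟩), z) = (i : ℤ) + j + 2 := by
    intro i j hi hj z; simp [hS]
  set h : ℕ → ℕ → ℤ := fun i j =>
    if hh : i < a ∧ j < b then ((S i j hh.1 hh.2).card : ℤ) else 0 with hh
  have hval : ∀ i j (hi : i < a) (hj : j < b), h i j = (S i j hi hj).card := by
    intro i j hi hj; simp only [hh]; rw [dif_pos ⟨hi, hj⟩]
  refine ⟨h, ?_, ?_⟩
  · intro i j hi hj
    refine ⟨by rw [hval i j hi hj]; positivity, ?_, fun c => ?_, fun c => ?_⟩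
    · rw [hval i j hi hj]
      have := Finset.card_le_univ (S i j hi hj)
      simp at this; exact_mod_cast this
    · rw [hval i j hi hj, hval _ _ c hj]
      norm_cast
      apply Finset.card_le_card
      intro z hz
      rw [memS] at *
      have h2 := H.1 (⟨i, by omega⟩, ⟨j, hj⟩) (⟨i+1, c⟩, ⟨j, hj⟩) z (by simp)
      have h3 := strict_bd H z (i+1) j c hj
      push_cast at *; omega
    · rw [hval i j hi hj, hval _ _ hi c]
      norm_cast
      apply Finset.card_le_card
      intro z hz
      rw [memS] at *
      have h2 := H.1 (⟨i, hi⟩, ⟨j, hj⟩) (⟨i, hi⟩, ⟨j+1, c⟩) z (by simp)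
      have h3 := strict_bd H z i (j+1) hi c
      push_cast at *; omega
  · ext ⟨⟨⟨i, hi⟩, ⟨j, hj⟩⟩, z⟩
    simp only [toLab]
    rw [hval i j hi hj]
    have h3 := strict_bd H z i j hi hj
    have := up_card (S i j hi hj) (by
      intro z z' hle hz
      rw [memS] at *
      have h2 := H.2.1 (⟨i, hi⟩, ⟨j, hj⟩) z z' hle
      have h3 := strict_bd H z' i j hi hj
      omega) z
    rw [memS] at this
    split_ifs with c
    · rw [this.2 c]; ring
    · have : ¬ _ := fun hh => c (this.1 hh)
      omega

lemma raisable_iff {a b ℓ : ℕ} {h : ℕ → ℕ → ℤ} (H : Good a b ℓ h) (i j : ℕ) (hi : i < a)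
    (hj : j < b) (z : Fin ℓ) :
    Raisable (Fin a × Fin b) ℓ (a + b) (toLab a b ℓ h) (⟨i, hi⟩, ⟨j, hj⟩) z ↔
      z.val + h i j < ℓ ∧ (ℓ : ℤ) ≤ z.val + tup a b ℓ h i j := by
  constructor
  · rintro ⟨g, hg, hlt, heq⟩
    have hb := strict_bd hg z i j hi hj
    have hz := z.2
    have h1 : z.val + h i j < ℓ := by
      by_contra hc
      simp only [toLab] at hlt
      rw [if_pos (by omega)] at hlt
      omega
    refine ⟨h1, ?_⟩
    simp only [toLab] at hlt
    rw [if_neg (by omega)] at hlt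
    have k1 : ∀ c : i + 1 < a, (ℓ : ℤ) ≤ z.val + h (i+1) j := by
      intro c
      have h2 := hg.1 (⟨i, by omega⟩, ⟨j, hj⟩) (⟨i+1, c⟩, ⟨j, hj⟩) z (by simp)
      rw [heq (⟨i+1, c⟩, ⟨j, hj⟩) z (by simp)] at h2
      simp only [toLab] at h2
      by_contra hc
      rw [if_neg hc] at h2
      push_cast at h2; omega
    have k2 : ∀ c : j + 1 < b, (ℓ : ℤ) ≤ z.val + h i (j+1) := by
      intro c
      have h2 := hg.1 (⟨i, by omega⟩, ⟨j, hj⟩) (⟨i, hi⟩, ⟨j+1, c⟩) z (by simp)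
      rw [heq (⟨i, hi⟩, ⟨j+1, c⟩) z (by simp)] at h2
      simp only [toLab] at h2
      by_contra hc
      rw [if_neg hc] at h2
      push_cast at h2; omega
    unfold tup
    split_ifs with c1 c2 c3
    · have := k1 c1; have := k2 c2; omega
    · exact k1 c1
    · exact k2 c3
    · omega
  · rintro ⟨h1, h2⟩
    refine ⟨toLab a b ℓ (fun i' j' => if i' = i ∧ j' = j then tup a b ℓ h i j else h i' j'),
      toLab_strict (H.modify (fun i' j' => i' = i ∧ j' = j) (by omega) (by omega) ?_ ?_), ?_, ?_⟩
    · intro i' j' hne; rw [if_neg hne]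
    · rintro i' j' hi' hj' ⟨rfl, rfl⟩
      simp only [and_self, if_true, le_refl, and_true]
      exact (H.tlo_le hi hj).trans (H.le_tup hi hj)
    · simp only [toLab, and_self, if_true]
      rw [if_neg (by omega), if_pos h2]; omega
    · rintro ⟨⟨i', hi'⟩, ⟨j', hj'⟩⟩ z' hne
      simp only [ne_eq, Prod.mk.injEq, Fin.mk.injEq] at hne
      simp only [toLab]
      rw [if_neg hne]

lemma lowerable_iff {a b ℓ : ℕ} {h : ℕ → ℕ → ℤ} (H : Good a b ℓ h) (i j : ℕ) (hi : i < a)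
    (hj : j < b) (z : Fin ℓ) :
    Lowerable (Fin a × Fin b) ℓ (a + b) (toLab a b ℓ h) (⟨i, hi⟩, ⟨j, hj⟩) z ↔
      (ℓ : ℤ) ≤ z.val + h i j ∧ z.val + tlo h i j < ℓ := by
  constructor
  · rintro ⟨g, hg, hlt, heq⟩
    have hb := strict_bd hg z i j hi hj
    have hz := z.2
    have h1 : (ℓ : ℤ) ≤ z.val + h i j := by
      by_contra hc
      simp only [toLab] at hlt
      rw [if_neg hc] at hlt
      omega
    refine ⟨h1, ?_⟩
    simp only [toLab] at hlt
    rw [if_pos h1] at hlt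
    have k1 : ∀ i', i = i' + 1 → z.val + h i' j < ℓ := by
      rintro i' rfl
      have h2 := hg.1 (⟨i', by omega⟩, ⟨j, hj⟩) (⟨i'+1, hi⟩, ⟨j, hj⟩) z (by simp)
      rw [heq (⟨i', by omega⟩, ⟨j, hj⟩) z (by simp)] at h2
      simp only [toLab] at h2
      by_contra hc
      rw [if_pos (by omega)] at h2
      push_cast at *; omega
    have k2 : ∀ j', j = j' + 1 → z.val + h i j' < ℓ := by
      rintro j' rfl
      have h2 := hg.1 (⟨i, hi⟩, ⟨j', by omega⟩) (⟨i, hi⟩, ⟨j'+1, hj⟩) z (by simp)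
      rw [heq (⟨i, hi⟩, ⟨j', by omega⟩) z (by simp)] at h2
      simp only [toLab] at h2
      by_contra hc
      rw [if_pos (by omega)] at h2
      push_cast at *; omega
    rcases i with _ | i <;> rcases j with _ | j <;> simp only [tlo]
    · omega
    · exact k2 _ rfl
    · exact k1 _ rfl
    · have := k1 _ rfl; have := k2 _ rfl; omega
  · rintro ⟨h1, h2⟩
    refine ⟨toLab a b ℓ (fun i' j' => if i' = i ∧ j' = j then tlo h i j else h i' j'),
      toLab_strict (H.modify (fun i' j' => i' = i ∧ j' = j) (by omega) (by omega) ?_ ?_), ?_, ?_⟩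
    · intro i' j' hne; rw [if_neg hne]
    · rintro i' j' hi' hj' ⟨rfl, rfl⟩
      simp only [and_self, if_true, le_refl, true_and]
      exact (H.tlo_le hi hj).trans (H.le_tup hi hj)
    · simp only [toLab, and_self, if_true]
      rw [if_neg (by omega), if_pos h1]; omega
    · rintro ⟨⟨i', hi'⟩, ⟨j', hj'⟩⟩ z' hne
      simp only [ne_eq, Prod.mk.injEq, Fin.mk.injEq] at hne
      simp only [toLab]
      rw [if_neg hne]

lemma card_interval (ℓ : ℕ) (m n : ℤ) (hm : 0 ≤ m) (hmn : m ≤ n) (hn : n ≤ ℓ) (p : Fin ℓ → Prop)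
    [DecidablePred p] (hp : ∀ z : Fin ℓ, p z ↔ m ≤ z.val ∧ (z.val : ℤ) < n) :
    ((Finset.univ.filter p).card : ℤ) = n - m := by
  have : (Finset.univ.filter p).map Fin.valEmbedding = Finset.Ico m.toNat n.toNat := by
    ext x
    simp only [Finset.mem_map, Finset.mem_filter, Finset.mem_univ, true_and, Finset.mem_Ico, hp,
      Fin.valEmbedding_apply]
    constructor
    · rintro ⟨z, hz, rfl⟩; omega
    · intro hx; exact ⟨⟨x, by omega⟩, by simp only; omega, rfl⟩
  rw [← Finset.card_map Fin.valEmbedding, this, Nat.card_Ico]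
  omega

/-- rank toggle -/
def tog (a b ℓ : ℕ) (k : ℕ) (h : ℕ → ℕ → ℤ) : ℕ → ℕ → ℤ := fun i j =>
  if i + j + 1 = k then tlo h i j + tup a b ℓ h i j - h i j else h i j

lemma Good.tog {a b ℓ : ℕ} {h : ℕ → ℕ → ℤ} (H : Good a b ℓ h) (k : ℕ) :
    Good a b ℓ (tog a b ℓ k h) := by
  refine H.modify (fun i j => i + j + 1 = k) (by omega) (by omega) ?_ ?_
  · intro i j hne; simp only [RBiro.tog]; rw [if_neg hne]
  · intro i j hi hj he
    simp only [RBiro.tog]; rw [if_pos he]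
    have := H.tlo_le hi hj
    have := H.le_tup hi hj
    omega

lemma bk_toLab {a b ℓ : ℕ} {h : ℕ → ℕ → ℤ} (H : Good a b ℓ h) (k : ℕ) :
    bkP (Fin a × Fin b) ℓ (a + b) (k : ℤ) (toLab a b ℓ h) = toLab a b ℓ (tog a b ℓ k h) := by
  ext ⟨⟨⟨i, hi⟩, ⟨j, hj⟩⟩, z⟩
  unfold bkP
  simp only [raisable_iff H, lowerable_iff H]
  have hz := z.2
  by_cases hk : i + j + 1 = k
  · have t1 := H.tlo_le hi hj
    have t2 := H.le_tup hi hj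
    have t3 := H.tlo_nonneg hi hj
    have t4 := H.tup_le hi hj
    have E1 : ∀ z : Fin ℓ, (toLab a b ℓ h ((⟨i, hi⟩, ⟨j, hj⟩), z) = (k : ℤ) ∧
        z.val + h i j < ℓ ∧ (ℓ : ℤ) ≤ z.val + tup a b ℓ h i j) ↔
        (z.val + h i j < ℓ ∧ (ℓ : ℤ) ≤ z.val + tup a b ℓ h i j) := by
      intro z
      refine and_iff_right_of_imp fun c => ?_
      simp only [toLab]; rw [if_neg (by omega)]; push_cast [← hk]; ring
    have E2 : ∀ z : Fin ℓ, (toLab a b ℓ h ((⟨i, hi⟩, ⟨j, hj⟩), z) = (k : ℤ) + 1 ∧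
        (ℓ : ℤ) ≤ z.val + h i j ∧ z.val + tlo h i j < ℓ) ↔
        ((ℓ : ℤ) ≤ z.val + h i j ∧ z.val + tlo h i j < ℓ) := by
      intro z
      refine and_iff_right_of_imp fun c => ?_
      simp only [toLab]; rw [if_pos (by omega)]; push_cast [← hk]; ring
    simp only [E1, E2]
    have ht : tog a b ℓ k h i j = tlo h i j + tup a b ℓ h i j - h i j := by
      simp [tog, hk]
    split_ifs with c1 c2
    · rw [← Nat.cast_le (α := ℤ), card_interval ℓ (ℓ - tup a b ℓ h i j) (z.val + 1)
        (by omega) (by omega) (by omega), card_interval ℓ (ℓ - h i j) (ℓ - tlo h i j)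
        (by omega) (by omega) (by omega)] at c2
      · simp only [toLab, ht]; rw [if_neg (by omega)]; push_cast [← hk]; ring
      · intro z; omega
      · intro z'; rw [Fin.le_def]; omega
    · rw [← Nat.cast_le (α := ℤ), card_interval ℓ (ℓ - tup a b ℓ h i j) (z.val + 1)
        (by omega) (by omega) (by omega), card_interval ℓ (ℓ - h i j) (ℓ - tlo h i j)
        (by omega) (by omega) (by omega)] at c2
      · simp only [toLab, ht]; rw [if_pos (by omega)]; push_cast [← hk]; ring
      · intro z; omega
      · intro z'; rw [Fin.le_def]; omega
    · simp only [toLab, ht]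
      congr 2
      apply propext
      omega
  · have e : tog a b ℓ k h i j = h i j := by simp [tog, hk]
    rw [if_neg]
    · simp only [toLab, e]
    · simp only [toLab]
      rintro (⟨h1, h2, h3⟩ | ⟨h1, h2, h3⟩)
      · rw [if_neg (by omega)] at h1; omega
      · rw [if_pos (by omega)] at h1; omega

/-- partial rowmotion -/
def part (a b ℓ : ℕ) (h : ℕ → ℕ → ℤ) (k : ℕ) : ℕ → ℕ → ℤ := fun i j =>
  if i + j + 1 ≤ k then trow a b ℓ h i j else h i j

lemma part_zero (a b ℓ : ℕ) (h : ℕ → ℕ → ℤ) : part a b ℓ h 0 = h := by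
  ext i j; simp [part]

lemma part_succ (a b ℓ : ℕ) (h : ℕ → ℕ → ℤ) (k : ℕ) :
    part a b ℓ h (k+1) = tog a b ℓ (k+1) (part a b ℓ h k) := by
  ext i j
  unfold tog
  split_ifs with c
  · have h1 : tlo (part a b ℓ h k) i j = tlo (trow a b ℓ h) i j := by
      rcases i with _ | i <;> rcases j with _ | j <;> simp only [tlo, part]
      · rw [if_pos (by omega)]
      · rw [if_pos (by omega)]
      · rw [if_pos (by omega), if_pos (by omega)]
    have h2 : tup a b ℓ (part a b ℓ h k) i j = tup a b ℓ h i j := by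
      simp only [tup, part]
      rw [if_neg (by omega : ¬ i + 1 + j + 1 ≤ k), if_neg (by omega : ¬ i + (j + 1) + 1 ≤ k)]
    rw [h1, h2]
    simp only [part]
    rw [if_pos (by omega), if_neg (by omega), trow_eq]
  · simp only [part]
    by_cases h : i + j + 1 ≤ k
    · rw [if_pos h, if_pos (by omega)]
    · rw [if_neg h, if_neg (by omega)]

lemma fold_toLab {a b ℓ : ℕ} {h : ℕ → ℕ → ℤ} (H : Good a b ℓ h) (k : ℕ) :
    Good a b ℓ (part a b ℓ h k) ∧
    (List.range k).foldl (fun g (i : ℕ) => bkP (Fin a × Fin b) ℓ (a + b) ((i : ℤ) + 1) g)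
      (toLab a b ℓ h) = toLab a b ℓ (part a b ℓ h k) := by
  induction k with
  | zero => rw [part_zero]; exact ⟨H, by simp⟩
  | succ k ih =>
    obtain ⟨g, e⟩ := ih
    rw [part_succ]
    refine ⟨g.tog _, ?_⟩
    rw [List.range_succ, List.foldl_append, e]
    simp only [List.foldl_cons, List.foldl_nil]
    rw [← bk_toLab g]; push_cast; rfl

lemma pro_toLab {a b ℓ : ℕ} {h : ℕ → ℕ → ℤ} (H : Good a b ℓ h) :
    Good a b ℓ (trow a b ℓ h) ∧
    proP (Fin a × Fin b) ℓ (a + b) (toLab a b ℓ h) = toLab a b ℓ (trow a b ℓ h) := by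
  obtain ⟨g, e⟩ := fold_toLab H (a + b - 1)
  have hp : ∀ i j, i < a → j < b → part a b ℓ h (a + b - 1) i j = trow a b ℓ h i j := by
    intro i j hi hj; simp only [part]; rw [if_pos (by omega)]
  constructor
  · intro i j hi hj
    have := g i j hi hj
    rw [hp i j hi hj] at this
    refine ⟨this.1, this.2.1, fun c => ?_, fun c => ?_⟩
    · rw [← hp _ _ c hj]; exact this.2.2.1 c
    · rw [← hp _ _ hi c]; exact this.2.2.2 c
  · unfold proP
    simp only [bind_pure_comp, List.map_eq_map, List.foldl_map]
    rw [e]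
    ext ⟨⟨⟨i, hi⟩, ⟨j, hj⟩⟩, z⟩
    simp only [toLab, hp i j hi hj]

lemma iter_toLab {a b ℓ : ℕ} {h : ℕ → ℕ → ℤ} (H : Good a b ℓ h) (t : ℕ) :
    Good a b ℓ ((trow a b ℓ)^[t] h) ∧
    (proP (Fin a × Fin b) ℓ (a + b))^[t] (toLab a b ℓ h) = toLab a b ℓ ((trow a b ℓ)^[t] h) := by
  induction t with
  | zero => exact ⟨H, rfl⟩
  | succ t ih =>
    rw [Function.iterate_succ_apply', Function.iterate_succ_apply', ih.2]
    exact pro_toLab ih.1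

lemma pro_recip {a b ℓ : ℕ} {f : (Fin a × Fin b) × Fin ℓ → ℤ}
    (hf : IsPStrict (Fin a × Fin b) ℓ (a + b) f) (x : Fin a) (y : Fin b) (z : Fin ℓ) (t : ℕ) :
    (proP (Fin a × Fin b) ℓ (a + b))^[t + (x.val + y.val + 1)] f ((x.rev, y.rev), z.rev) =
      (a : ℤ) + b + 1 - (proP (Fin a × Fin b) ℓ (a + b))^[t] f ((x, y), z) := by
  obtain ⟨h, H, rfl⟩ := exists_height hf
  obtain ⟨H', e⟩ := iter_toLab H t
  rw [add_comm t, Function.iterate_add_apply, e, (iter_toLab H' _).2]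
  have := trop_recip a b ℓ ((trow a b ℓ)^[t] h) x y x.2 y.2
  have hx := x.2
  have hy := y.2
  have hz := z.2
  rw [show a - 1 - x.val = a - (x.val + 1) by omega,
    show b - 1 - y.val = b - (y.val + 1) by omega] at this
  simp only [toLab, Fin.val_rev, this]
  split_ifs <;> omega

lemma sum_shift (φ : ℕ → ℤ) (n : ℕ) (hφ : ∀ i, φ (i + n) = φ i) (s : ℕ) :
    ∑ i ∈ Finset.range n, φ (i + s) = ∑ i ∈ Finset.range n, φ i := by
  induction s with
  | zero => rfl
  | succ s ih =>
    rw [← ih]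
    have h1 := Finset.sum_range_succ (fun i => φ (i + s)) n
    have h2 := Finset.sum_range_succ' (fun i => φ (i + s)) n
    have h3 : φ (n + s) = φ (0 + s) := by rw [add_comm n, hφ]; simp
    have h4 : ∀ i, φ (i + (s + 1)) = φ (i + 1 + s) := fun i => by congr 1; ring
    simp only [h4]
    linarith

end RBiro

/-- for antipodal elements `p = (x,y,z)` and
`p* = (a+1−x, b+1−y, ℓ+1−z)` of `[a]×[b]×[ℓ]`, the statistic
`χ_S(f) = f(p) + f(p*)` is `(a+b+1)`-mesic on `L_{([a]×[b])×[ℓ]}(R^{a+b})` under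
promotion: for every promotion orbit (of size the minimal period `n` of any of its
elements), the average of `χ_S` over the orbit equals `a+b+1`. -/
theorem pstrict_antipodal_homomesy (a b ℓ : ℕ)
    (f : (Fin a × Fin b) × Fin ℓ → ℤ)
    (hf : IsPStrict (Fin a × Fin b) ℓ (a + b) f)
    (x : Fin a) (y : Fin b) (z : Fin ℓ)
    (n : ℕ) (hn : 0 < n)
    (hper : (proP (Fin a × Fin b) ℓ (a + b))^[n] f = f)
    (hmin : ∀ m : ℕ, 0 < m → m < n → (proP (Fin a × Fin b) ℓ (a + b))^[m] f ≠ f) :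
    ∑ i ∈ Finset.range n,
        ((proP (Fin a × Fin b) ℓ (a + b))^[i] f ((x, y), z) +
          (proP (Fin a × Fin b) ℓ (a + b))^[i] f ((x.rev, y.rev), z.rev)) =
      ((a : ℤ) + b + 1) * n := by
  have hrec := fun t => RBiro.pro_recip hf x y z t
  have hs := RBiro.sum_shift
    (fun i => (proP (Fin a × Fin b) ℓ (a + b))^[i] f ((x.rev, y.rev), z.rev)) n
    (fun i => by simp only [Function.iterate_add_apply, hper]) (x.val + y.val + 1)
  simp only [hrec] at hs
  rw [Finset.sum_add_distrib, ← hs, ← Finset.sum_add_distrib]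
  simp
  ring
end
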